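/- arXiv:2106.14953 — 5 statements merged into one kernel-verified Lean document; each statement's English description precedes it below -/
import Mathlib

section
/- There exist a constant C > 0 and a real number x₀ such that for all x ≥ x₀, the number of integers n with 1 ≤ n ≤ x that are divisible by a pair of primes q₁, q₂ satisfying x^{1/(10 log log log x)} < q₁ ≤ x and q₁ · x^{−1/(log log log x)²} ≤ q₂ ≤ q₁ (with q₁ ≠ q₂, so that q₁q₂ ∣ n) is at most C·x/log log log x. -/
open scoped Classical
open Filter Finset

/-- Primes in the `k`-th dyadic block. -/
noncomputable def dyBlock (k : ℕ) : Finset ℕ :=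
  (Finset.range (2 ^ (k + 1))).filter (fun p => p.Prime ∧ Nat.log 2 p = k)

lemma mem_dyBlock {k p : ℕ} (hp : p.Prime) (hk : Nat.log 2 p = k) : p ∈ dyBlock k := by
  unfold dyBlock
  rw [Finset.mem_filter, Finset.mem_range]
  refine ⟨?_, hp, hk⟩
  subst hk
  exact Nat.lt_pow_succ_log_self (by norm_num) p

lemma sum_dyBlock {k : ℕ} (hk : 1 ≤ k) : ∑ p ∈ dyBlock k, (1 : ℝ) / p ≤ 4 / k := by
  have hl2 : 0 < Real.log 2 := Real.log_pos (by norm_num)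
  have hk' : (0 : ℝ) < k := by exact_mod_cast hk
  have h2k : (0 : ℝ) < 2 ^ k := by positivity
  have hth : ∑ p ∈ dyBlock k, Real.log p ≤ Real.log 4 * 2 ^ (k + 1) := by
    refine le_trans ?_ (Chebyshev.theta_le_log4_mul_x (x := (2 : ℝ) ^ (k + 1)) (by positivity))
    rw [Chebyshev.theta]
    apply Finset.sum_le_sum_of_subset_of_nonneg
    · intro p hp
      unfold dyBlock at hp
      rw [Finset.mem_filter, Finset.mem_range] at hp
      have : ⌊(2 : ℝ) ^ (k + 1)⌋₊ = 2 ^ (k + 1) := by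
        have := Nat.floor_natCast (R := ℝ) (2 ^ (k + 1))
        push_cast at this
        exact this
      rw [Finset.mem_filter, Finset.mem_Ioc, this]
      exact ⟨⟨hp.2.1.pos, hp.1.le⟩, hp.2.1⟩
    · intro p _ _
      exact Real.log_natCast_nonneg p
  have h4 : Real.log 4 = 2 * Real.log 2 := by
    rw [show (4 : ℝ) = 2 ^ 2 by norm_num, Real.log_pow]; norm_num
  have hterm : ∀ p ∈ dyBlock k, (1 : ℝ) / p ≤ Real.log p / (k * Real.log 2 * 2 ^ k) := by
    intro p hp
    unfold dyBlock at hp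
    rw [Finset.mem_filter, Finset.mem_range] at hp
    obtain ⟨_, hp, hlog⟩ := hp
    have h1 : 2 ^ k ≤ p := by
      rw [← hlog]; exact Nat.pow_log_le_self 2 hp.ne_zero
    have h1' : (2 : ℝ) ^ k ≤ p := by exact_mod_cast h1
    have h2 : k * Real.log 2 ≤ Real.log p := by
      rw [← Real.log_pow]; exact Real.log_le_log h2k h1'
    rw [div_le_div_iff₀ (by linarith) (by positivity), one_mul]
    exact mul_le_mul h2 h1' h2k.le (le_trans (by positivity) h2)
  calc ∑ p ∈ dyBlock k, (1 : ℝ) / p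
      ≤ ∑ p ∈ dyBlock k, Real.log p / (k * Real.log 2 * 2 ^ k) := Finset.sum_le_sum hterm
    _ = (∑ p ∈ dyBlock k, Real.log p) / (k * Real.log 2 * 2 ^ k) := by rw [Finset.sum_div]
    _ ≤ (Real.log 4 * 2 ^ (k + 1)) / (k * Real.log 2 * 2 ^ k) := by gcongr
    _ = 4 / k := by rw [h4, pow_succ]; field_simp; norm_num

lemma count_pairs (m K N : ℕ) (hK : 2 ≤ K) (hN : 2 * N ≤ K) (S : Finset ℕ)
    (hS : ∀ n ∈ S, n ∈ Finset.Icc 1 m ∧ ∃ p q : ℕ, p.Prime ∧ q.Prime ∧ K ≤ Nat.log 2 p ∧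
      Nat.log 2 q ≤ Nat.log 2 p ∧ Nat.log 2 p ≤ Nat.log 2 q + N ∧ p * q ∣ n) :
    (S.card : ℝ) ≤ m * (64 * (N + 1) / K) := by
  have hsub : S ⊆ (Finset.Ioc (K - 1) (m + K)).biUnion fun k => (Finset.Icc (k - N) k).biUnion fun j =>
      (dyBlock k).biUnion fun p => (dyBlock j).biUnion fun q =>
        (Finset.Ioc 0 m).filter (fun n => p * q ∣ n) := by
    intro n hn
    obtain ⟨hnm, p, q, hp, hq, h1, h2, h3, h4⟩ := hS n hn
    rw [Finset.mem_Icc] at hnm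
    simp only [Finset.mem_biUnion]
    have hpn : p ≤ n := Nat.le_of_dvd (by omega) ((Dvd.intro _ rfl).trans h4)
    have hlp : Nat.log 2 p ≤ p := Nat.log_le_self 2 p
    refine ⟨Nat.log 2 p, ?_, Nat.log 2 q, ?_, p, mem_dyBlock hp rfl, q, mem_dyBlock hq rfl, ?_⟩
    · rw [Finset.mem_Ioc]; omega
    · rw [Finset.mem_Icc]; omega
    · rw [Finset.mem_filter, Finset.mem_Ioc]; exact ⟨by omega, h4⟩
  have hcard : (S.card : ℝ) ≤ ∑ k ∈ Finset.Ioc (K - 1) (m + K), ∑ j ∈ Finset.Icc (k - N) k,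
      ∑ p ∈ dyBlock k, ∑ q ∈ dyBlock j, (m : ℝ) * ((1 / p) * (1 / q)) := by
    have h0 := Finset.card_le_card hsub
    have h1 : S.card ≤ ∑ k ∈ Finset.Ioc (K - 1) (m + K), ∑ j ∈ Finset.Icc (k - N) k,
      ∑ p ∈ dyBlock k, ∑ q ∈ dyBlock j, ((Finset.Ioc 0 m).filter (fun n => p * q ∣ n)).card := by
      refine h0.trans (Finset.card_biUnion_le.trans ?_)
      refine Finset.sum_le_sum fun k _ => Finset.card_biUnion_le.trans ?_
      refine Finset.sum_le_sum fun j _ => Finset.card_biUnion_le.trans ?_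
      exact Finset.sum_le_sum fun p _ => Finset.card_biUnion_le
    refine (Nat.cast_le.mpr h1).trans ?_
    push_cast
    refine Finset.sum_le_sum fun k _ => Finset.sum_le_sum fun j _ => Finset.sum_le_sum fun p _ =>
      Finset.sum_le_sum fun q _ => ?_
    have : ((Finset.Ioc 0 m).filter (fun n => p * q ∣ n)).card = m / (p * q) := by
      rw [← Nat.Ioc_filter_dvd_card_eq_div]
    rw [this]
    refine Nat.cast_div_le.trans (le_of_eq ?_)
    push_cast
    rw [div_mul_div_comm, one_mul, mul_one_div]
  refine hcard.trans ?_
  have hKr : (2 : ℝ) ≤ K := by exact_mod_cast hK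
  have hk : ∀ k ∈ Finset.Ioc (K - 1) (m + K), ∑ j ∈ Finset.Icc (k - N) k,
      ∑ p ∈ dyBlock k, ∑ q ∈ dyBlock j, (m : ℝ) * ((1 / p) * (1 / q)) ≤
      m * (32 * (N + 1)) * ((k : ℝ) ^ 2)⁻¹ := by
    intro k hk
    rw [Finset.mem_Ioc] at hk
    have hkpos : (0 : ℝ) < k := by exact_mod_cast (show 0 < k by omega)
    have hj : ∀ j ∈ Finset.Icc (k - N) k,
        ∑ p ∈ dyBlock k, ∑ q ∈ dyBlock j, (m : ℝ) * ((1 / p) * (1 / q)) ≤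
        m * 32 * ((k : ℝ) ^ 2)⁻¹ := by
      intro j hj
      rw [Finset.mem_Icc] at hj
      have hj2 : k ≤ 2 * j := by omega
      have hj2r : (k : ℝ) ≤ 2 * j := by exact_mod_cast hj2
      have hjpos : (0 : ℝ) < j := by linarith
      have e : ∑ p ∈ dyBlock k, ∑ q ∈ dyBlock j, (m : ℝ) * ((1 / p) * (1 / q)) =
          m * ((∑ p ∈ dyBlock k, (1 : ℝ) / p) * ∑ q ∈ dyBlock j, (1 : ℝ) / q) := by
        rw [Finset.sum_mul_sum, Finset.mul_sum]
        exact Finset.sum_congr rfl fun p _ => by rw [Finset.mul_sum]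
      rw [e, mul_assoc]
      refine mul_le_mul_of_nonneg_left ?_ (Nat.cast_nonneg m)
      calc (∑ p ∈ dyBlock k, (1 : ℝ) / p) * ∑ q ∈ dyBlock j, (1 : ℝ) / q
          ≤ (4 / k) * (4 / j) := mul_le_mul (sum_dyBlock (by omega)) (sum_dyBlock (by omega))
            (Finset.sum_nonneg fun _ _ => by positivity) (by positivity)
        _ ≤ (4 / k) * (8 / k) := by
            refine mul_le_mul_of_nonneg_left ?_ (by positivity)
            rw [div_le_div_iff₀ hjpos hkpos]; linarith
        _ = 32 * ((k : ℝ) ^ 2)⁻¹ := by field_simp; norm_num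
    refine (Finset.sum_le_card_nsmul _ _ _ hj).trans (le_of_eq ?_)
    rw [Nat.card_Icc, show k + 1 - (k - N) = N + 1 by omega, nsmul_eq_mul]
    push_cast; ring
  refine (Finset.sum_le_sum hk).trans ?_
  rw [← Finset.mul_sum]
  have hs : ∑ k ∈ Finset.Ioc (K - 1) (m + K), ((k : ℝ) ^ 2)⁻¹ ≤ 2 / K := by
    refine (sum_Ioc_inv_sq_le_sub (by omega) (by omega)).trans ?_
    have h1 : (0 : ℝ) ≤ ((m + K : ℕ) : ℝ)⁻¹ := by positivity
    have h2 : ((K - 1 : ℕ) : ℝ) = K - 1 := by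
      rw [Nat.cast_sub (by omega)]; simp
    have h3 : ((K : ℝ) - 1)⁻¹ ≤ 2 / K := by
      rw [← one_div, div_le_div_iff₀ (by linarith) (by linarith)]; linarith
    rw [h2]; linarith
  calc (m : ℝ) * (32 * (N + 1)) * ∑ k ∈ Finset.Ioc (K - 1) (m + K), ((k : ℝ) ^ 2)⁻¹
      ≤ m * (32 * (N + 1)) * (2 / K) := mul_le_mul_of_nonneg_left hs (by positivity)
    _ = _ := by ring

theorem multiplicatively_close_prime_pairs :
    ∃ C : ℝ, 0 < C ∧ ∃ x₀ : ℝ, ∀ x : ℝ, x₀ ≤ x →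
      (((Finset.Icc 1 ⌊x⌋₊).filter (fun n => ∃ q₁ q₂ : ℕ, q₁.Prime ∧ q₂.Prime ∧ q₁ ≠ q₂ ∧
          x ^ (1 / (10 * Real.log (Real.log (Real.log x)))) < (q₁ : ℝ) ∧ (q₁ : ℝ) ≤ x ∧
          (q₁ : ℝ) * x ^ (-(1 / (Real.log (Real.log (Real.log x))) ^ 2)) ≤ (q₂ : ℝ) ∧
          q₂ ≤ q₁ ∧ q₁ * q₂ ∣ n)).card : ℝ)
        ≤ C * x / Real.log (Real.log (Real.log x)) := by
  have hlim : Tendsto (fun x : ℝ => Real.log (Real.log (Real.log x))) atTop atTop :=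
    Real.tendsto_log_atTop.comp (Real.tendsto_log_atTop.comp Real.tendsto_log_atTop)
  have hlim2 : Tendsto (fun x : ℝ => Real.log (Real.log x)) atTop atTop :=
    Real.tendsto_log_atTop.comp Real.tendsto_log_atTop
  have hev := (((hlim.eventually_ge_atTop 80).and (hlim2.eventually_ge_atTop 1)).and
    (Real.tendsto_log_atTop.eventually_ge_atTop 1)).and (eventually_ge_atTop (1 : ℝ))
  obtain ⟨x₀, hx₀⟩ := Filter.eventually_atTop.mp hev
  refine ⟨3840, by norm_num, x₀, fun x hx => ?_⟩
  obtain ⟨⟨⟨hL, hu⟩, hX⟩, hx1⟩ := hx₀ x hx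
  have hXpow : ∀ a : ℝ, x ^ a = Real.exp (Real.log x * a) :=
    fun a => Real.rpow_def_of_pos (by linarith) a
  have e1 : Real.exp (Real.log (Real.log (Real.log x))) = Real.log (Real.log x) :=
    Real.exp_log (by linarith)
  have e2 : Real.exp (Real.log (Real.log x)) = Real.log x := Real.exp_log (by linarith)
  have hq1 := Real.quadratic_le_exp_of_nonneg (x := Real.log (Real.log (Real.log x))) (by linarith)
  have hq2 := Real.quadratic_le_exp_of_nonneg (x := Real.log (Real.log x)) (by linarith)
  rw [e1] at hq1
  rw [e2] at hq2
  set L := Real.log (Real.log (Real.log x)) with hLdef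
  set u := Real.log (Real.log x)
  set X := Real.log x
  have hXL : L ^ 2 ≤ X := by nlinarith
  have hl2 : 0 < Real.log 2 := Real.log_pos (by norm_num)
  have hl2' : Real.log 2 ≤ 1 := by linarith [Real.log_two_lt_d9]
  obtain ⟨w, hw⟩ : ∃ w, w = X / Real.log 2 := ⟨_, rfl⟩
  have hwX : w * Real.log 2 = X := by rw [hw]; field_simp
  have hwL : L ^ 2 ≤ w := by
    refine hXL.trans ?_
    rw [hw, le_div_iff₀ hl2]; nlinarith
  have hLpos : 0 < L := by linarith
  have hwpos : 0 < w := by nlinarith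
  have hexp2 : ∀ k : ℕ, Real.exp (k * Real.log 2) = 2 ^ k := by
    intro k
    rw [Real.exp_nat_mul, Real.exp_log (by norm_num)]
  set K := ⌊w / (10 * L)⌋₊ with hKdef
  set N := ⌈w / L ^ 2⌉₊ with hNdef
  have hK1 : (K : ℝ) ≤ w / (10 * L) := Nat.floor_le (by positivity)
  have hK2 : w / (10 * L) < K + 1 := Nat.lt_floor_add_one _
  have hN1 : w / L ^ 2 ≤ N := Nat.le_ceil _
  have hN2 : (N : ℝ) < w / L ^ 2 + 1 := Nat.ceil_lt_add_one (by positivity)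
  obtain ⟨r, hr⟩ : ∃ r, r = w / L ^ 2 := ⟨_, rfl⟩
  have hwr : w = r * L ^ 2 := by rw [hr]; field_simp
  have hr1 : 1 ≤ r := by rw [hr, le_div_iff₀ (by positivity)]; linarith
  have hwr2 : w / (10 * L) = r * L / 10 := by rw [hwr]; field_simp
  rw [← hr] at hN1 hN2
  rw [hwr2] at hK1 hK2
  have hrL : 80 * r ≤ r * L := by nlinarith
  have hKr : r * L / 20 ≤ K := by linarith
  have hK4 : (4 : ℝ) ≤ K := by linarith
  have h2N : (2 : ℝ) * N ≤ K := by linarith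
  have hmain := count_pairs ⌊x⌋₊ K N (by exact_mod_cast (by linarith : (2 : ℝ) ≤ K))
    (by exact_mod_cast h2N) _ (fun n hn => ?_ : ∀ n ∈ ((Finset.Icc 1 ⌊x⌋₊).filter (fun n => ∃ q₁ q₂ : ℕ, q₁.Prime ∧ q₂.Prime ∧ q₁ ≠ q₂ ∧
          x ^ (1 / (10 * L)) < (q₁ : ℝ) ∧ (q₁ : ℝ) ≤ x ∧
          (q₁ : ℝ) * x ^ (-(1 / L ^ 2)) ≤ (q₂ : ℝ) ∧
          q₂ ≤ q₁ ∧ q₁ * q₂ ∣ n)), _)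
  · refine hmain.trans ?_
    have hx0 : (⌊x⌋₊ : ℝ) ≤ x := Nat.floor_le (by linarith)
    rw [show 3840 * x / L = x * (3840 / L) by ring]
    refine mul_le_mul hx0 ?_ (by positivity) (by linarith)
    rw [div_le_div_iff₀ (by linarith) hLpos]
    have h3 : (N : ℝ) + 1 ≤ 3 * r := by linarith
    have h4 := mul_le_mul_of_nonneg_right h3 hLpos.le
    linarith
  · rw [Finset.mem_filter] at hn
    obtain ⟨hnm, p, q, hp, hq, -, h1, -, h3, h4, h5⟩ := hn
    refine ⟨hnm, p, q, hp, hq, ?_, Nat.log_mono_right h4, ?_, h5⟩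
    · apply Nat.le_log_of_pow_le (by norm_num)
      have : (2 : ℝ) ^ K ≤ p := by
        refine le_trans ?_ h1.le
        rw [hXpow, ← hexp2, Real.exp_le_exp, ← hwX]
        have : w * Real.log 2 * (1 / (10 * L)) = (r * L / 10) * Real.log 2 := by
          rw [← hwr2]; field_simp
        rw [this]
        exact mul_le_mul_of_nonneg_right hK1 hl2.le
      exact_mod_cast this
    · have hz : x ^ (1 / L ^ 2) ≤ 2 ^ N := by
        rw [hXpow, ← hexp2, Real.exp_le_exp, ← hwX]
        have : w * Real.log 2 * (1 / L ^ 2) = r * Real.log 2 := by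
          rw [hr]; field_simp
        rw [this]
        exact mul_le_mul_of_nonneg_right hN1 hl2.le
      have hzpos : 0 < x ^ (1 / L ^ 2) := Real.rpow_pos_of_pos (by linarith) _
      have hpq : (p : ℝ) ≤ q * 2 ^ N := by
        rw [Real.rpow_neg (by linarith), ← div_eq_mul_inv, div_le_iff₀ hzpos] at h3
        exact h3.trans (mul_le_mul_of_nonneg_left hz (Nat.cast_nonneg q))
      have hpq' : p ≤ q * 2 ^ N := by exact_mod_cast hpq
      have hlt : p < 2 ^ (Nat.log 2 q + 1 + N) := by
        rw [pow_add]
        exact lt_of_le_of_lt hpq' (Nat.mul_lt_mul_of_pos_right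
          (Nat.lt_pow_succ_log_self (by norm_num) q) (by positivity))
      have := Nat.log_lt_of_lt_pow hp.ne_zero hlt
      omega
end

section
/- Let a and k be integers with gcd(a, k) = 1 and k > 0. There is a constant C (depending on a and k) such that for all real x ≥ 3, the number of integers n with 1 ≤ n ≤ x for which there does not exist a prime p ≡ a (mod k) with p ∥ n is at most C·x·(log x)^{−1/φ(k)}. -/
open scoped Classical
open Filter Finset

lemma aux_term (s : ℝ) (hs : 1 < s) (n : ℕ) :
    ((n + 2 : ℕ) : ℝ) ^ (-s) ≤
      (((n + 1 : ℕ) : ℝ) ^ (1 - s) - ((n + 2 : ℕ) : ℝ) ^ (1 - s)) / (s - 1) := by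
  have ht : 0 < s - 1 := by linarith
  rw [le_div_iff₀ ht]
  have h2 : (0 : ℝ) < ((n + 2 : ℕ) : ℝ) := by positivity
  have h1 : (0 : ℝ) < ((n + 1 : ℕ) : ℝ) := by positivity
  have hl : Real.log ((n + 1 : ℕ) : ℝ) ≤ Real.log ((n + 2 : ℕ) : ℝ) - 1 / ((n + 2 : ℕ) : ℝ) := by
    have := Real.log_le_sub_one_of_pos (div_pos h1 h2)
    rw [Real.log_div h1.ne' h2.ne'] at this
    have e : ((n + 1 : ℕ) : ℝ) / ((n + 2 : ℕ) : ℝ) - 1 = - (1 / ((n + 2 : ℕ) : ℝ)) := by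
      field_simp; push_cast; ring
    linarith
  have e1 : ((n + 2 : ℕ) : ℝ) ^ (1 - s) * (1 + (s - 1) * (1 / ((n + 2 : ℕ) : ℝ)))
      ≤ ((n + 1 : ℕ) : ℝ) ^ (1 - s) := by
    calc _ ≤ ((n + 2 : ℕ) : ℝ) ^ (1 - s) * Real.exp ((s - 1) * (1 / ((n + 2 : ℕ) : ℝ))) := by
          gcongr
          linarith [Real.add_one_le_exp ((s - 1) * (1 / ((n + 2 : ℕ) : ℝ)))]
      _ ≤ _ := by
          rw [Real.rpow_def_of_pos h2, Real.rpow_def_of_pos h1, ← Real.exp_add]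
          apply Real.exp_le_exp.2
          nlinarith
  have e2 : ((n + 2 : ℕ) : ℝ) ^ (-s) = ((n + 2 : ℕ) : ℝ) ^ (1 - s) * (1 / ((n + 2 : ℕ) : ℝ)) := by
    rw [show (1 - s) = -s + 1 by ring, Real.rpow_add_one h2.ne']
    field_simp
  rw [e2]
  nlinarith

lemma zeta_summable (s : ℝ) (hs : 1 < s) : Summable (fun n : ℕ => (n : ℝ) ^ (-s)) :=
  Real.summable_nat_rpow.2 (by linarith)

lemma zeta_bound (s : ℝ) (hs : 1 < s) : ∑' n : ℕ, (n : ℝ) ^ (-s) ≤ 1 + 1 / (s - 1) := by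
  have ht : 0 < s - 1 := by linarith
  apply Real.tsum_le_of_sum_range_le
  · intro n; positivity
  have key : ∀ N : ℕ, ∑ i ∈ range (N + 2), (i : ℝ) ^ (-s) ≤
      1 + (1 - ((N + 1 : ℕ) : ℝ) ^ (1 - s)) / (s - 1) := by
    intro N
    induction N with
    | zero => simp [Finset.sum_range_succ, Real.zero_rpow (show -s ≠ 0 by linarith)]
    | succ N ih =>
      rw [Finset.sum_range_succ]
      have := aux_term s hs N
      have e : (1 - ((N + 1 : ℕ) : ℝ) ^ (1 - s)) / (s - 1) +
        (((N + 1 : ℕ) : ℝ) ^ (1 - s) - ((N + 2 : ℕ) : ℝ) ^ (1 - s)) / (s - 1) =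
        (1 - ((N + 1 + 1 : ℕ) : ℝ) ^ (1 - s)) / (s - 1) := by
        rw [← add_div]; congr 1; ring
      linarith
  intro n
  calc ∑ i ∈ range n, (i : ℝ) ^ (-s) ≤ ∑ i ∈ range (n + 2), (i : ℝ) ^ (-s) := by
        apply Finset.sum_le_sum_of_subset_of_nonneg
        · intro i; simp; omega
        · intros; positivity
    _ ≤ _ := key n
    _ ≤ _ := by
        gcongr
        have : 0 ≤ ((n + 1 : ℕ) : ℝ) ^ (1 - s) := by positivity
        linarith

/-- `n` is a positive integer all of whose prime factors lie in `P`. -/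
def Good (P : Set ℕ) (n : ℕ) : Prop := n ≠ 0 ∧ ∀ p : ℕ, p.Prime → p ∣ n → p ∈ P

lemma good_mul (P : Set ℕ) (m n : ℕ) : Good P (m * n) ↔ Good P m ∧ Good P n := by
  constructor
  · rintro ⟨h0, h⟩
    exact ⟨⟨left_ne_zero_of_mul h0, fun p hp hd => h p hp (hd.mul_right n)⟩,
      ⟨right_ne_zero_of_mul h0, fun p hp hd => h p hp (hd.mul_left m)⟩⟩
  · rintro ⟨⟨h1, h2⟩, ⟨h3, h4⟩⟩
    exact ⟨mul_ne_zero h1 h3, fun p hp hd => ((hp.dvd_mul).1 hd).elim (h2 p hp) (h4 p hp)⟩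

lemma good_one (P : Set ℕ) : Good P 1 :=
  ⟨one_ne_zero, fun p hp hd => absurd (Nat.dvd_one.1 hd) hp.ne_one⟩

lemma good_prime (P : Set ℕ) (p : ℕ) (hp : p.Prime) : Good P p ↔ p ∈ P := by
  constructor
  · intro h; exact h.2 p hp dvd_rfl
  · intro h
    refine ⟨hp.ne_zero, fun q hq hd => ?_⟩
    rwa [(Nat.prime_dvd_prime_iff_eq hq hp).1 hd]

/-- completely multiplicative function supported on the `P`-good integers -/
noncomputable def cm (P : Set ℕ) (s : ℝ) : ℕ →*₀ ℝ where
  toFun n := if Good P n then (n : ℝ) ^ (-s) else 0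
  map_zero' := by simp [Good]
  map_one' := by simp [good_one]
  map_mul' m n := by
    by_cases h1 : Good P m <;> by_cases h2 : Good P n <;> simp [good_mul, h1, h2]
    rw [Real.mul_rpow (by positivity) (by positivity)]

lemma cm_apply (P : Set ℕ) (s : ℝ) (n : ℕ) :
    cm P s n = if Good P n then (n : ℝ) ^ (-s) else 0 := rfl

lemma cm_nonneg (P : Set ℕ) (s : ℝ) (n : ℕ) : 0 ≤ cm P s n := by
  rw [cm_apply]; split_ifs <;> positivity

lemma cm_le (P : Set ℕ) (s : ℝ) (n : ℕ) : cm P s n ≤ (n : ℝ) ^ (-s) := by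
  rw [cm_apply]; split_ifs
  · exact le_rfl
  · positivity

lemma cm_summable (P : Set ℕ) (s : ℝ) (hs : 1 < s) : Summable (cm P s) :=
  Summable.of_nonneg_of_le (cm_nonneg P s) (cm_le P s) (zeta_summable s hs)

lemma cm_hasProd (P : Set ℕ) (s : ℝ) (hs : 1 < s) :
    HasProd (fun p : Nat.Primes ↦ (1 - cm P s p)⁻¹) (∑' n, cm P s n) :=
  EulerProduct.eulerProduct_completely_multiplicative_hasProd (by
    simpa only [Real.norm_of_nonneg (cm_nonneg P s _)] using cm_summable P s hs)

lemma cm_prime (P : Set ℕ) (s : ℝ) (p : Nat.Primes) :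
    cm P s p = if (p : ℕ) ∈ P then ((p : ℕ) : ℝ) ^ (-s) else 0 := by
  rw [cm_apply]; simp only [good_prime P p p.2]

lemma cm_mul_compl (P : Set ℕ) (s : ℝ) (hs : 1 < s) :
    (∑' n, cm P s n) * (∑' n, cm Pᶜ s n) = ∑' n : ℕ, (n : ℝ) ^ (-s) := by
  have h := (cm_hasProd P s hs).mul (cm_hasProd Pᶜ s hs)
  have h2 := cm_hasProd Set.univ s hs
  have e : ∑' n, cm Set.univ s n = ∑' n : ℕ, (n : ℝ) ^ (-s) := by
    congr 1; ext n
    rw [cm_apply]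
    by_cases hn : n = 0
    · simp [hn, Good, Real.zero_rpow (show -s ≠ 0 by linarith)]
    · simp [hn, Good]
  rw [← e]
  refine h.unique ?_
  convert h2 using 2 with p
  simp only [cm_prime]
  by_cases hp : (p : ℕ) ∈ P <;> simp [hp]

lemma exp_le_cm (P : Set ℕ) (s : ℝ) (hs : 1 < s) :
    Real.exp (∑' p : Nat.Primes, cm P s p) ≤ ∑' n, cm P s n := by
  have hsum : Summable (fun p : Nat.Primes => cm P s p) :=
    (cm_summable P s hs).comp_injective Subtype.val_injective
  have h1 := hsum.hasSum.rexp
  refine le_of_tendsto_of_tendsto' h1 (cm_hasProd P s hs) (fun S => ?_)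
  apply Finset.prod_le_prod
  · intros; simp only [Function.comp_apply]; positivity
  · intro p _
    have hlt : cm P s p < 1 := by
      refine (cm_le P s p).trans_lt ?_
      apply Real.rpow_lt_one_of_one_lt_of_neg
      · exact_mod_cast p.2.one_lt
      · linarith
    simp only [Function.comp_apply]
    rw [le_inv_comm₀ (Real.exp_pos _) (by linarith), ← Real.exp_neg]
    linarith [Real.add_one_le_exp (-(cm P s p))]

open ArithmeticFunction.vonMangoldt in
lemma LSeries_ofReal (f : ℕ → ℝ) (hf : f 0 = 0) (x : ℝ) :
    LSeries (fun n => (f n : ℂ)) (x : ℂ) = ((∑' n, f n / (n : ℝ) ^ x : ℝ) : ℂ) := by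
  simp only [Complex.ofReal_tsum, Complex.ofReal_div, Complex.ofReal_cpow (Nat.cast_nonneg _),
    Complex.ofReal_natCast, LSeries, LSeries.term]
  refine tsum_congr fun n ↦ ?_
  split_ifs with hn
  · simp [hn, hf]
  · rfl

open ArithmeticFunction.vonMangoldt in
lemma prime_sum_lower {q : ℕ} [NeZero q] (a : ZMod q) (ha : IsUnit a) :
    ∃ C : ℝ, ∀ s ∈ Set.Ioc (1 : ℝ) 2,
      -(q.totient : ℝ)⁻¹ * Real.log (s - 1) - C ≤
        ∑' p : Nat.Primes, cm {n : ℕ | (n : ZMod q) = a} s p := by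
  obtain ⟨C, hC⟩ := LSeries_residueClass_lower_bound ha
  set g : ℕ → ℝ := fun n => residueClass a n / Real.log n with hg
  have hg0 : g 0 = 0 := by simp [hg]
  have hlog : ∀ n : ℕ, 0 ≤ Real.log n := fun n => Real.log_natCast_nonneg n
  have hgn : ∀ n, 0 ≤ g n := fun n => div_nonneg (residueClass_nonneg a n) (hlog n)
  have hg1 : ∀ n, g n ≤ 1 := fun n =>
    div_le_one_of_le₀ ((residueClass_le a n).trans ArithmeticFunction.vonMangoldt_le_log) (hlog n)
  have habs : LSeries.abscissaOfAbsConv (fun n => (g n : ℂ)) ≤ 1 := by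
    apply LSeries.abscissaOfAbsConv_le_of_le_const
    refine ⟨1, fun n _ => ?_⟩
    rw [Complex.norm_real, Real.norm_of_nonneg (hgn n)]
    exact hg1 n
  have hlm : LSeries.logMul (fun n => (g n : ℂ)) = fun n => ((residueClass a n : ℝ) : ℂ) := by
    ext n
    simp only [LSeries.logMul]
    rw [← Complex.natCast_log, ← Complex.ofReal_mul]
    congr 1
    by_cases h : Real.log n = 0
    · rw [h, zero_mul]
      have h1 := (residueClass_le a n).trans ArithmeticFunction.vonMangoldt_le_log
      have h2 := residueClass_nonneg a n
      rw [h] at h1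
      exact le_antisymm h2 h1
    · simp only [hg]; field_simp
  set G : ℝ → ℝ := fun s => ∑' n, g n / (n : ℝ) ^ s with hG
  have hder : ∀ s : ℝ, 1 < s → HasDerivAt G (-(∑' n, residueClass a n / (n : ℝ) ^ s)) s := by
    intro s hs
    have hlt : LSeries.abscissaOfAbsConv (fun n => (g n : ℂ)) < ((s : ℂ).re : EReal) := by
      refine habs.trans_lt ?_
      simp only [Complex.ofReal_re]
      exact_mod_cast hs
    have h1 := (LSeries_hasDerivAt hlt).real_of_complex
    rw [hlm, LSeries_ofReal _ (residueClass_apply_zero a)] at h1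
    convert h1 using 1
    · ext x
      rw [LSeries_ofReal g hg0]
      simp [hG]
    · rw [Complex.neg_re, Complex.ofReal_re]
  set h : ℝ → ℝ := fun s => G s + (q.totient : ℝ)⁻¹ * Real.log (s - 1) - C * s with hh
  have hhd : ∀ s : ℝ, 1 < s → HasDerivAt h
      (-(∑' n, residueClass a n / (n : ℝ) ^ s) + (q.totient : ℝ)⁻¹ * (1 / (s - 1)) - C) s := by
    intro s hs
    have h2 : HasDerivAt (fun s : ℝ => Real.log (s - 1)) (1 / (s - 1)) s :=
      ((hasDerivAt_id s).sub_const 1).log (by simp; linarith)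
    have h3 : HasDerivAt (fun s : ℝ => C * s) C s := by
      simpa using (hasDerivAt_id s).const_mul C
    exact ((hder s hs).add (h2.const_mul _)).sub h3
  have hanti : AntitoneOn h (Set.Ioc 1 2) := by
    apply antitoneOn_of_deriv_nonpos (convex_Ioc 1 2)
    · intro x hx
      exact (hhd x hx.1).continuousAt.continuousWithinAt
    · intro x hx
      rw [interior_Ioc] at hx
      exact (hhd x hx.1).differentiableAt.differentiableWithinAt
    · intro x hx
      rw [interior_Ioc] at hx
      rw [(hhd x hx.1).deriv]
      have := hC (x := x) ⟨hx.1, hx.2.le⟩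
      rw [div_eq_mul_one_div] at this
      linarith
  set w : ℕ → ℝ := fun n => (if n.Prime then 0 else residueClass a n) / n with hw
  have hws : Summable w := by
    convert! summable_residueClass_non_primes_div a
  have hw0 : ∀ n, 0 ≤ w n := by
    intro n; simp only [hw]
    split_ifs
    · simp
    · exact div_nonneg (residueClass_nonneg a n) (by positivity)
  refine ⟨2 * |C| - h 2 + (∑' n, w n) / Real.log 2, fun s hs => ?_⟩
  have h1 := hanti hs ⟨one_lt_two, le_rfl⟩ hs.2
  have hl2 : 0 < Real.log 2 := Real.log_pos one_lt_two
  have hsP : Summable (fun p : Nat.Primes => cm {n : ℕ | (n : ZMod q) = a} s p) :=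
    (cm_summable _ s hs.1).comp_injective Subtype.val_injective
  have hind : Summable ({p : ℕ | p.Prime}.indicator (cm {n : ℕ | (n : ZMod q) = a} s)) :=
    (cm_summable _ s hs.1).indicator _
  have hGle : G s ≤ (∑' p : Nat.Primes, cm {n : ℕ | (n : ZMod q) = a} s p) +
      (∑' n, w n) / Real.log 2 := by
    have e : (∑' p : Nat.Primes, cm {n : ℕ | (n : ZMod q) = a} s p) =
        ∑' n, {p : ℕ | p.Prime}.indicator (cm {n : ℕ | (n : ZMod q) = a} s) n :=
      tsum_subtype {p : ℕ | p.Prime} (cm {n : ℕ | (n : ZMod q) = a} s)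
    rw [e, ← tsum_div_const, ← hind.tsum_add (hws.div_const _)]
    have hle : ∀ n : ℕ, g n / (n : ℝ) ^ s ≤
        {p : ℕ | p.Prime}.indicator (cm {n : ℕ | (n : ZMod q) = a} s) n + w n / Real.log 2 := by
      intro n
      by_cases hn : n < 2
      · have : g n = 0 := by
          interval_cases n <;> simp [hg]
        rw [this, zero_div]
        exact add_nonneg (Set.indicator_nonneg (fun n _ => cm_nonneg _ _ _) _)
          (div_nonneg (hw0 n) hl2.le)
      have hn2 : (2 : ℝ) ≤ n := by exact_mod_cast (not_lt.1 hn)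
      by_cases hp : n.Prime
      · have hwn : w n = 0 := by simp [hw, hp]
        rw [hwn, Set.indicator_of_mem (show n ∈ {p : ℕ | p.Prime} from hp)]
        have := cm_prime {n : ℕ | (n : ZMod q) = a} s ⟨n, hp⟩
        simp only at this
        rw [this]
        by_cases hna : (n : ZMod q) = a
        · simp only [Set.mem_ofPred_eq, hna, if_true]
          rw [Real.rpow_neg (by positivity), zero_div, add_zero, div_eq_mul_inv]
          exact mul_le_of_le_one_left (by positivity) (hg1 n)
        · simp [hg, residueClass, hna]
      · rw [Set.indicator_of_notMem (show n ∉ {p : ℕ | p.Prime} from hp), zero_add]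
        simp only [hg, hw, hp, if_false]
        rw [div_right_comm]
        have hx := residueClass_nonneg a n
        have : Real.log 2 ≤ Real.log n := Real.log_le_log (by norm_num) hn2
        have h3 : (n : ℝ) ≤ (n : ℝ) ^ s := by
          conv_lhs => rw [← Real.rpow_one (n : ℝ)]
          exact Real.rpow_le_rpow_of_exponent_le (by linarith) hs.1.le
        gcongr
    refine Summable.tsum_le_tsum hle ?_ (hind.add (hws.div_const _))
    refine Summable.of_nonneg_of_le (fun n => div_nonneg (hgn n) (by positivity)) hle
      (hind.add (hws.div_const _))
  have hCs : -(2 * |C|) ≤ C * s := by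
    have : |C * s| ≤ |C| * 2 := by
      rw [abs_mul, abs_of_pos (by linarith [hs.1] : (0:ℝ) < s)]
      gcongr
      exact hs.2
    linarith [neg_abs_le (C * s)]
  have h4 : h s = G s + (q.totient : ℝ)⁻¹ * Real.log (s - 1) - C * s := rfl
  linarith

/-- `P`-good integers up to `x` -/
noncomputable def A (P : Set ℕ) (x : ℝ) : Finset ℕ := (Finset.Icc 1 ⌊x⌋₊).filter (Good P)

lemma mem_A (P : Set ℕ) (x : ℝ) (hx : 0 ≤ x) (n : ℕ) : n ∈ A P x ↔ (n : ℝ) ≤ x ∧ Good P n := by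
  simp only [A, Finset.mem_filter, Finset.mem_Icc, Nat.le_floor_iff hx]
  constructor
  · rintro ⟨⟨_, h2⟩, h3⟩; exact ⟨h2, h3⟩
  · rintro ⟨h2, h3⟩; exact ⟨⟨Nat.one_le_iff_ne_zero.2 h3.1, h2⟩, h3⟩

lemma sum_log_le (P : Set ℕ) (x : ℝ) (hx : 0 ≤ x) :
    ∑ n ∈ A P x, Real.log n ≤ (Real.log 4 + 4) * x * ∑ m ∈ A P x, (1 : ℝ) / m := by
  have h1 : ∀ n ∈ A P x, Real.log n =
      ∑ e ∈ A P x, if e ∣ n then ArithmeticFunction.vonMangoldt (n / e) else 0 := by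
    intro n hn
    rw [mem_A P x hx] at hn
    rw [← ArithmeticFunction.vonMangoldt_sum,
      ← Nat.sum_div_divisors n (fun d => ArithmeticFunction.vonMangoldt d), ← Finset.sum_filter]
    apply Finset.sum_congr _ (fun _ _ => rfl)
    ext e
    simp only [Nat.mem_divisors, Finset.mem_filter, mem_A P x hx]
    constructor
    · rintro ⟨⟨c, rfl⟩, h0⟩
      refine ⟨⟨le_trans ?_ hn.1, ((good_mul P _ _).1 hn.2).1⟩, dvd_mul_right _ _⟩
      exact_mod_cast Nat.le_mul_of_pos_right _ (Nat.pos_of_ne_zero (right_ne_zero_of_mul h0))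
    · rintro ⟨_, h⟩; exact ⟨h, hn.2.1⟩
  rw [Finset.sum_congr rfl h1, Finset.sum_comm, Finset.mul_sum]
  apply Finset.sum_le_sum
  intro e he
  rw [mem_A P x hx] at he
  have he0 : 0 < e := Nat.pos_of_ne_zero he.2.1
  have he0' : (0 : ℝ) < e := by exact_mod_cast he0
  rw [← Finset.sum_filter]
  have hpsi := Chebyshev.psi_le_const_mul_self (x := x / e) (by positivity)
  have : ∑ n ∈ (A P x).filter (e ∣ ·), ArithmeticFunction.vonMangoldt (n / e) ≤
      Chebyshev.psi (x / e) := by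
    rw [Chebyshev.psi]
    rw [← Finset.sum_image (s := (A P x).filter (e ∣ ·)) (g := fun n => n / e)
      (f := fun d => ArithmeticFunction.vonMangoldt d)]
    · apply Finset.sum_le_sum_of_subset_of_nonneg
      · intro d
        simp only [Finset.mem_image, Finset.mem_filter, mem_A P x hx, Finset.mem_Ioc]
        rintro ⟨n, ⟨⟨hn1, hn2⟩, c, rfl⟩, rfl⟩
        rw [Nat.mul_div_cancel_left _ he0]
        refine ⟨Nat.pos_of_ne_zero (right_ne_zero_of_mul hn2.1), Nat.le_floor ?_⟩
        rw [le_div_iff₀ he0']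
        push_cast at hn1
        linarith
      · intros; exact ArithmeticFunction.vonMangoldt_nonneg
    · intro m hm n hn hmn
      simp only [Finset.coe_filter, Set.mem_ofPred_eq] at hm hn
      exact (Nat.div_left_inj hm.2 hn.2).1 hmn
  refine this.trans (hpsi.trans (le_of_eq ?_))
  ring

lemma card_mul_log_le (P : Set ℕ) (x : ℝ) (hx : 0 < x) :
    ((A P x).card : ℝ) * Real.log x ≤ (Real.log 4 + 5) * x * ∑ m ∈ A P x, (1 : ℝ) / m := by
  have h := sum_log_le P x hx.le
  have h2 : ((A P x).card : ℝ) * Real.log x ≤ ∑ m ∈ A P x, (Real.log m + x * (1 / m)) := by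
    rw [← nsmul_eq_mul]
    apply Finset.card_nsmul_le_sum
    intro m hm
    rw [mem_A P x hx.le] at hm
    have hm0 : (0 : ℝ) < m := by exact_mod_cast Nat.pos_of_ne_zero hm.2.1
    have := Real.log_le_sub_one_of_pos (div_pos hx hm0)
    rw [Real.log_div hx.ne' hm0.ne'] at this
    rw [mul_one_div]
    linarith
  rw [Finset.sum_add_distrib, ← Finset.mul_sum] at h2
  linarith

lemma sum_inv_le (P : Set ℕ) (x : ℝ) (hx : 3 ≤ x) :
    ∑ m ∈ A P x, (1 : ℝ) / m ≤ Real.exp 1 * ∑' n, cm P (1 + 1 / Real.log x) n := by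
  have hl : 0 < Real.log x := Real.log_pos (by linarith)
  have hs : 1 < 1 + 1 / Real.log x := by
    have : 0 < 1 / Real.log x := by positivity
    linarith
  refine le_trans ?_ (mul_le_mul_of_nonneg_left
    ((cm_summable P _ hs).sum_le_tsum (A P x) (fun n _ => cm_nonneg P _ n)) (Real.exp_pos 1).le)
  rw [Finset.mul_sum]
  apply Finset.sum_le_sum
  intro m hm
  rw [mem_A P x (by linarith)] at hm
  have hm0 : (0 : ℝ) < m := by exact_mod_cast Nat.pos_of_ne_zero hm.2.1
  rw [cm_apply, if_pos hm.2, neg_add, Real.rpow_add hm0, Real.rpow_neg_one, one_div]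
  have : 1 ≤ Real.exp 1 * (m : ℝ) ^ (-(1 / Real.log x)) := by
    rw [Real.rpow_def_of_pos hm0, ← Real.exp_add]
    apply Real.one_le_exp
    have h1 : Real.log m ≤ Real.log x := Real.log_le_log hm0 hm.1
    have : Real.log m * (1 / Real.log x) ≤ 1 := by
      rw [mul_one_div, div_le_one hl]; exact h1
    linarith
  calc (m : ℝ)⁻¹ = (m : ℝ)⁻¹ * 1 := by ring
    _ ≤ (m : ℝ)⁻¹ * (Real.exp 1 * (m : ℝ) ^ (-(1 / Real.log x))) := by gcongr
    _ = _ := by ring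

lemma one_le_log {x : ℝ} (hx : 3 ≤ x) : 1 ≤ Real.log x := by
  rw [Real.le_log_iff_exp_le (by linarith)]
  linarith [Real.exp_one_lt_d9]

lemma card_A_bound {q : ℕ} [NeZero q] (a : ZMod q) (ha : IsUnit a) :
    ∃ K : ℝ, 0 ≤ K ∧ ∀ x : ℝ, 3 ≤ x →
      ((A {n : ℕ | (n : ZMod q) = a}ᶜ x).card : ℝ) ≤
        K * x * (Real.log x) ^ (-(1 / (q.totient : ℝ))) := by
  obtain ⟨C, hC⟩ := prime_sum_lower a ha
  have hl4 : 0 ≤ Real.log 4 := Real.log_nonneg (by norm_num)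
  refine ⟨(Real.log 4 + 5) * Real.exp 1 * 2 * Real.exp C, by positivity, fun x hx => ?_⟩
  have h1 := one_le_log hx
  have hl : 0 < Real.log x := by linarith
  set L := Real.log x with hL
  set P : Set ℕ := {n : ℕ | (n : ZMod q) = a} with hP
  set s := 1 + 1 / L with hs
  have hs1 : 1 < s := by
    have : 0 < 1 / L := by positivity
    linarith
  have hs2 : s ≤ 2 := by
    have : 1 / L ≤ 1 := by rw [div_le_one hl]; exact h1
    linarith
  have b1 := hC s ⟨hs1, hs2⟩
  have b2 := exp_le_cm P s hs1
  have b3 := cm_mul_compl P s hs1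
  have b4 := zeta_bound s hs1
  have e1 : s - 1 = 1 / L := by simp [hs]
  rw [e1, one_div, Real.log_inv] at b1
  rw [e1, one_div_one_div] at b4
  have b5 : L ^ (1 / (q.totient : ℝ)) * Real.exp (-C) ≤ ∑' n, cm P s n := by
    refine le_trans ?_ b2
    rw [Real.rpow_def_of_pos hl, ← Real.exp_add]
    apply Real.exp_le_exp.2
    refine le_trans (le_of_eq ?_) b1
    rw [one_div]; ring
  have hn : 0 ≤ ∑' n, cm Pᶜ s n := tsum_nonneg (cm_nonneg _ _)
  have b6 : ∑' n, cm Pᶜ s n ≤ 2 * L * Real.exp C * L ^ (-(1 / (q.totient : ℝ))) := by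
    have : L ^ (1 / (q.totient : ℝ)) * Real.exp (-C) * ∑' n, cm Pᶜ s n ≤ 2 * L :=
      (mul_le_mul_of_nonneg_right b5 hn).trans (by linarith)
    rw [Real.exp_neg] at this
    rw [Real.rpow_neg hl.le]
    have hpos : 0 < L ^ (1 / (q.totient : ℝ)) := Real.rpow_pos_of_pos hl _
    have hE := Real.exp_pos C
    rw [← div_eq_mul_inv, le_div_iff₀ hpos]
    calc _ = Real.exp C * (L ^ (1 / (q.totient : ℝ)) * (Real.exp C)⁻¹ * ∑' n, cm Pᶜ s n) := by
          field_simp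
      _ ≤ Real.exp C * (2 * L) := by gcongr
      _ = _ := by ring
  have b7 := card_mul_log_le Pᶜ x (by linarith)
  have b8 := sum_inv_le Pᶜ x hx
  rw [← hL, ← hs] at b8
  rw [← hL] at b7
  have : ((A Pᶜ x).card : ℝ) * L ≤ ((Real.log 4 + 5) * Real.exp 1 * 2 * Real.exp C * x *
      L ^ (-(1 / (q.totient : ℝ)))) * L := by
    calc _ ≤ _ := b7
      _ ≤ (Real.log 4 + 5) * x * (Real.exp 1 *
        (2 * L * Real.exp C * L ^ (-(1 / (q.totient : ℝ))))) := by
          gcongr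
          exact b8.trans (by gcongr)
      _ = _ := by ring
  exact le_of_mul_le_mul_right this hl

lemma decomp (P : Set ℕ) (n : ℕ) (hn : n ≠ 0)
    (h : ∀ p : ℕ, p.Prime → p ∈ P → p ∣ n → p ^ 2 ∣ n) :
    ∃ u v m : ℕ, n = u ^ 2 * v ^ 3 * m ∧ Good Pᶜ m := by
  induction n using Nat.strong_induction_on with
  | _ n ih =>
    by_cases hg : Good Pᶜ n
    · exact ⟨1, 1, n, by ring, hg⟩
    have : ∃ p : ℕ, p.Prime ∧ p ∣ n ∧ p ∈ P := by
      by_contra hcon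
      push Not at hcon
      exact hg ⟨hn, fun p hp hd => hcon p hp hd⟩
    obtain ⟨p, hp, hd, hpP⟩ := this
    obtain ⟨e, n', hn', rfl⟩ := Nat.exists_eq_pow_mul_and_not_dvd hn p hp.ne_one
    have hcop : Nat.Coprime p n' := (Nat.Prime.coprime_iff_not_dvd hp).2 hn'
    have he : 2 ≤ e := by
      have h2 := h p hp hpP hd
      have := (Nat.Coprime.pow_left 2 hcop).dvd_of_dvd_mul_right h2
      exact (Nat.pow_dvd_pow_iff_le_right hp.one_lt).1 this
    have hn'0 : n' ≠ 0 := right_ne_zero_of_mul hn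
    have hlt : n' < p ^ e * n' := by
      have : 1 < p ^ e := Nat.one_lt_pow (by omega) hp.one_lt
      nlinarith [Nat.pos_of_ne_zero hn'0]
    obtain ⟨u, v, m, hm, hgm⟩ := ih n' hlt hn'0 (by
      intro r hr hrP hrd
      have h2 := h r hr hrP (hrd.mul_left _)
      have hne : r ≠ p := by rintro rfl; exact hn' hrd
      have : Nat.Coprime (r ^ 2) (p ^ e) :=
        Nat.Coprime.pow _ _ ((Nat.coprime_primes hr hp).2 hne)
      exact this.dvd_of_dvd_mul_left h2)
    rcases Nat.even_or_odd' e with ⟨j, rfl | rfl⟩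
    · exact ⟨u * p ^ j, v, m, by rw [hm]; ring, hgm⟩
    · obtain ⟨i, rfl⟩ : ∃ i, j = i + 1 := ⟨j - 1, by omega⟩
      exact ⟨u * p ^ i, v * p, m, by rw [hm]; ring, hgm⟩

lemma card_A_div (P : Set ℕ) (c K : ℝ) (hc0 : 0 ≤ c) (hc1 : c ≤ 1) (hK : 0 ≤ K)
    (hA : ∀ x : ℝ, 3 ≤ x → ((A P x).card : ℝ) ≤ K * x * (Real.log x) ^ (-c))
    (x d : ℝ) (hx : 3 ≤ x) (hd : 1 ≤ d) :
    ((A P (x / d)).card : ℝ) ≤ 15 * K * x * (Real.log x) ^ (-c) * d ^ (-(3 / 4 : ℝ)) := by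
  have hl := one_le_log hx
  have hd0 : 0 < d := by linarith
  by_cases hxd : x / d < 1
  · have : A P (x / d) = ∅ := by
      simp [A, Nat.floor_eq_zero.2 hxd]
    rw [this]
    simp only [Finset.card_empty, Nat.cast_zero]
    have : 0 ≤ Real.log x := by linarith
    positivity
  push Not at hxd
  have hy3 : 3 ≤ 3 * (x / d) := by linarith
  have h1 := hA (3 * (x / d)) hy3
  have hsub : A P (x / d) ⊆ A P (3 * (x / d)) := by
    intro n
    rw [mem_A _ _ (by linarith), mem_A _ _ (by linarith)]
    rintro ⟨h, h'⟩
    exact ⟨by linarith, h'⟩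
  have h2 : ((A P (x / d)).card : ℝ) ≤ (A P (3 * (x / d))).card := by
    exact_mod_cast Finset.card_le_card hsub
  have hY := one_le_log hy3
  set Y := Real.log (3 * (x / d)) with hYdef
  have hld : 0 ≤ Real.log d := Real.log_nonneg hd
  have h3 : Real.log x ≤ Y * (1 + Real.log d) := by
    have : Real.log x ≤ Y + Real.log d := by
      rw [hYdef, ← Real.log_mul (by positivity) (by positivity)]
      apply Real.log_le_log (by linarith)
      field_simp
      linarith
    nlinarith
  have h4 : 1 + Real.log d ≤ 5 * d ^ (1 / 4 : ℝ) := by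
    have a1 := Real.log_le_rpow_div hd0.le (show (0 : ℝ) < 1 / 4 by norm_num)
    have a2 : 1 ≤ d ^ (1 / 4 : ℝ) := Real.one_le_rpow hd (by norm_num)
    have : d ^ (1 / 4 : ℝ) / (1 / 4) = 4 * d ^ (1 / 4 : ℝ) := by ring
    linarith
  have h5 : (Real.log x) ^ c ≤ Y ^ c * (5 * d ^ (1 / 4 : ℝ)) := by
    calc (Real.log x) ^ c ≤ (Y * (1 + Real.log d)) ^ c := by gcongr
      _ = Y ^ c * (1 + Real.log d) ^ c := Real.mul_rpow (by linarith) (by linarith)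
      _ ≤ Y ^ c * (1 + Real.log d) ^ (1 : ℝ) := by
          gcongr
          linarith
      _ ≤ _ := by rw [Real.rpow_one]; gcongr
  have h6 : Y ^ (-c) ≤ (Real.log x) ^ (-c) * (5 * d ^ (1 / 4 : ℝ)) := by
    rw [Real.rpow_neg (by linarith), Real.rpow_neg (by linarith)]
    have p1 : 0 < Y ^ c := Real.rpow_pos_of_pos (by linarith) _
    have p2 : 0 < (Real.log x) ^ c := Real.rpow_pos_of_pos (by linarith) _
    rw [inv_mul_eq_div, le_div_iff₀ p2, inv_mul_eq_div, div_le_iff₀ p1]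
    linarith
  have h7 : d ^ (-(3 / 4 : ℝ)) = d ^ (1 / 4 : ℝ) / d := by
    rw [show -(3 / 4 : ℝ) = 1 / 4 - 1 by norm_num, Real.rpow_sub_one hd0.ne']
  calc _ ≤ K * (3 * (x / d)) * Y ^ (-c) := h2.trans h1
    _ ≤ K * (3 * (x / d)) * ((Real.log x) ^ (-c) * (5 * d ^ (1 / 4 : ℝ))) := by gcongr
    _ = _ := by rw [h7]; ring

theorem pomerance_no_exact_prime_in_progression (a : ℤ) (k : ℕ) (hk : 0 < k)
    (hak : Int.gcd a (k : ℤ) = 1) :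
    ∃ C : ℝ, ∀ x : ℝ, 3 ≤ x →
      (((Finset.Icc 1 ⌊x⌋₊).filter (fun n => ¬ ∃ p : ℕ, p.Prime ∧
          (p : ℤ) ≡ a [ZMOD (k : ℤ)] ∧ p ∣ n ∧ ¬ p ^ 2 ∣ n)).card : ℝ)
        ≤ C * x * (Real.log x) ^ (-(1 / (Nat.totient k : ℝ))) := by
  haveI : NeZero k := ⟨hk.ne'⟩
  have ha : IsUnit (a : ZMod k) := by
    rw [ZMod.coe_int_isUnit_iff_isCoprime]
    exact (Int.isCoprime_iff_gcd_eq_one.2 hak).symm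
  obtain ⟨K, hK, hA⟩ := card_A_bound (a : ZMod k) ha
  set P : Set ℕ := {n : ℕ | (n : ZMod k) = a} with hP
  have hmem : ∀ p : ℕ, p ∈ P ↔ (p : ℤ) ≡ a [ZMOD (k : ℤ)] := by
    intro p
    rw [← ZMod.intCast_eq_intCast_iff]
    simp [hP]
  set c : ℝ := 1 / (Nat.totient k : ℝ) with hc
  have ht : (1 : ℝ) ≤ (Nat.totient k : ℝ) := by exact_mod_cast Nat.totient_pos.2 hk
  have hc0 : 0 ≤ c := by positivity
  have hc1 : c ≤ 1 := by rw [hc, div_le_one (by linarith)]; exact ht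
  set Z1 := ∑' n : ℕ, (n : ℝ) ^ (-(3 / 2 : ℝ)) with hZ1
  set Z2 := ∑' n : ℕ, (n : ℝ) ^ (-(9 / 4 : ℝ)) with hZ2
  refine ⟨15 * K * (Z1 * Z2), fun x hx => ?_⟩
  have hl := one_le_log hx
  set N := ⌊x⌋₊ with hN
  have hsub : ((Finset.Icc 1 N).filter (fun n => ¬ ∃ p : ℕ, p.Prime ∧
          (p : ℤ) ≡ a [ZMOD (k : ℤ)] ∧ p ∣ n ∧ ¬ p ^ 2 ∣ n)) ⊆
      (Finset.Icc 1 N ×ˢ Finset.Icc 1 N).biUnion (fun t : ℕ × ℕ =>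
        (A Pᶜ (x / ((t.1 ^ 2 * t.2 ^ 3 : ℕ) : ℝ))).image (fun m => t.1 ^ 2 * t.2 ^ 3 * m)) := by
    intro n hn
    simp only [Finset.mem_filter, Finset.mem_Icc] at hn
    obtain ⟨⟨hn1, hn2⟩, hn3⟩ := hn
    obtain ⟨u, v, m, rfl, hg⟩ := decomp P n (by omega) (by
      intro p hp hpP hd
      by_contra hcon
      exact hn3 ⟨p, hp, (hmem p).1 hpP, hd, hcon⟩)
    have hu : 0 < u := Nat.pos_of_ne_zero (by rintro rfl; simp at hn1)
    have hv : 0 < v := Nat.pos_of_ne_zero (by rintro rfl; simp at hn1)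
    have hm : 0 < m := Nat.pos_of_ne_zero hg.1
    simp only [Finset.mem_biUnion, Finset.mem_product, Finset.mem_Icc, Finset.mem_image]
    have hd0 : 0 < u ^ 2 * v ^ 3 * m := by positivity
    refine ⟨(u, v), ⟨⟨hu, ?_⟩, hv, ?_⟩, m, ?_, rfl⟩
    · refine le_trans (Nat.le_of_dvd hd0 ?_) hn2
      exact ((dvd_pow_self u two_ne_zero).mul_right _).mul_right _
    · refine le_trans (Nat.le_of_dvd hd0 ?_) hn2
      exact ((dvd_pow_self v three_ne_zero).mul_left _).mul_right _
    · have hpos : (0 : ℝ) < ((u ^ 2 * v ^ 3 : ℕ) : ℝ) := by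
        exact_mod_cast (by positivity : 0 < u ^ 2 * v ^ 3)
      rw [mem_A _ _ (by positivity)]
      refine ⟨?_, hg⟩
      rw [le_div_iff₀ hpos]
      have := (Nat.le_floor_iff (by linarith : (0 : ℝ) ≤ x)).1 hn2
      push_cast at this ⊢
      linarith
  have hcard : (((Finset.Icc 1 N).filter (fun n => ¬ ∃ p : ℕ, p.Prime ∧
          (p : ℤ) ≡ a [ZMOD (k : ℤ)] ∧ p ∣ n ∧ ¬ p ^ 2 ∣ n)).card : ℝ) ≤
      ∑ t ∈ Finset.Icc 1 N ×ˢ Finset.Icc 1 N,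
        ((A Pᶜ (x / ((t.1 ^ 2 * t.2 ^ 3 : ℕ) : ℝ))).card : ℝ) := by
    have := (Finset.card_le_card hsub).trans (Finset.card_biUnion_le.trans
      (Finset.sum_le_sum (fun t _ => Finset.card_image_le)))
    exact_mod_cast this
  have hZ1s : Summable (fun n : ℕ => (n : ℝ) ^ (-(3 / 2 : ℝ))) := zeta_summable _ (by norm_num)
  have hZ2s : Summable (fun n : ℕ => (n : ℝ) ^ (-(9 / 4 : ℝ))) := zeta_summable _ (by norm_num)
  have hL0 : 0 ≤ Real.log x := by linarith
  calc _ ≤ _ := hcard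
    _ ≤ ∑ t ∈ Finset.Icc 1 N ×ˢ Finset.Icc 1 N, 15 * K * x * (Real.log x) ^ (-c) *
          (((t.1 : ℕ) : ℝ) ^ (-(3 / 2 : ℝ)) * ((t.2 : ℕ) : ℝ) ^ (-(9 / 4 : ℝ))) := by
        apply Finset.sum_le_sum
        rintro ⟨u, v⟩ ht
        simp only [Finset.mem_product, Finset.mem_Icc] at ht
        have hd1 : (1 : ℝ) ≤ ((u ^ 2 * v ^ 3 : ℕ) : ℝ) := by
          have hu : 0 < u := ht.1.1
          have hv : 0 < v := ht.2.1
          exact_mod_cast (by positivity : 0 < u ^ 2 * v ^ 3)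
        refine (card_A_div Pᶜ c K hc0 hc1 hK hA x _ hx hd1).trans (le_of_eq ?_)
        congr 1
        push_cast
        rw [Real.mul_rpow (by positivity) (by positivity), ← Real.rpow_natCast,
          ← Real.rpow_natCast, ← Real.rpow_mul (by positivity), ← Real.rpow_mul (by positivity)]
        norm_num
    _ = 15 * K * x * (Real.log x) ^ (-c) * ((∑ u ∈ Finset.Icc 1 N, (u : ℝ) ^ (-(3 / 2 : ℝ))) *
          ∑ v ∈ Finset.Icc 1 N, (v : ℝ) ^ (-(9 / 4 : ℝ))) := by
        rw [← Finset.mul_sum, Finset.sum_mul_sum, Finset.sum_product]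
    _ ≤ 15 * K * x * (Real.log x) ^ (-c) * (Z1 * Z2) := by
        have b1 := hZ1s.sum_le_tsum (Finset.Icc 1 N) (fun n _ => by positivity)
        have b2 := hZ2s.sum_le_tsum (Finset.Icc 1 N) (fun n _ => by positivity)
        have : 0 ≤ Z1 := tsum_nonneg (fun n => by positivity)
        gcongr
    _ = _ := by ring
end

section
/- There exists an absolute constant λ₀ > 0 such that for all real x ≥ 3 and all real numbers α, the number of positive integers m ≤ x with σ(m)/m = α is at most exp(λ₀ · log x / log log x). -/
open scoped Classical
open Filter Finset

/-- `sigma1 n` is `σ(n)`, the sum of all positive divisors of `n`. -/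
def sigma1 (n : ℕ) : ℕ := ArithmeticFunction.sigma 1 n

theorem sigma1_mul {a b : ℕ} (h : Nat.Coprime a b) : sigma1 (a * b) = sigma1 a * sigma1 b :=
  ArithmeticFunction.isMultiplicative_sigma.map_mul_of_coprime h

theorem sigma1_pos {a : ℕ} (h : a ≠ 0) : 0 < sigma1 a := by
  unfold sigma1
  rw [ArithmeticFunction.sigma_one_apply]
  exact Finset.sum_pos (fun d hd => Nat.pos_of_mem_divisors hd) ⟨1, by simp [h]⟩

theorem sigma1_gt {a : ℕ} (h : 1 < a) : a < sigma1 a := by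
  unfold sigma1
  rw [ArithmeticFunction.sigma_one_apply]
  have : ∑ d ∈ ({1, a} : Finset ℕ), d ≤ ∑ d ∈ a.divisors, d := by
    apply Finset.sum_le_sum_of_subset
    intro d hd
    simp only [Finset.mem_insert, Finset.mem_singleton] at hd
    rcases hd with rfl | rfl <;> simp <;> omega
  rw [Finset.sum_pair (by omega)] at this
  omega

/-- Bound for `σ(d)/d` when `d` is free of small primes. -/
theorem sigma1_rough (Y : ℕ) (hY : 0 < Y) (d : ℕ) (h0 : d ≠ 0)
    (h : ∀ p, p.Prime → p ∣ d → Y ≤ p) :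
    (sigma1 d : ℝ) * (1 - ArithmeticFunction.cardFactors d / Y) ≤ d := by
  induction d using Nat.recOnPosPrimePosCoprime with
  | zero => simp at h0
  | one => simp [sigma1]
  | prime_pow p n hp hn =>
    have hYp : Y ≤ p := h p hp (dvd_pow_self p hn.ne')
    have hs : (sigma1 (p ^ n) : ℝ) * ((p : ℝ) - 1) ≤ p ^ n * p := by
      unfold sigma1
      rw [ArithmeticFunction.sigma_one_apply_prime_pow hp]
      push_cast
      rw [geom_sum_mul, pow_succ]
      linarith
    have hp0 : (0 : ℝ) < p := by exact_mod_cast hp.pos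
    have hY0 : (0 : ℝ) < Y := by exact_mod_cast hY
    have hYp' : (Y : ℝ) ≤ p := by exact_mod_cast hYp
    have h1 : (sigma1 (p ^ n) : ℝ) * (1 - 1 / p) ≤ p ^ n := by
      have : (1 - 1 / (p : ℝ)) = (p - 1) / p := by field_simp
      rw [this, ← mul_div_assoc, div_le_iff₀ hp0]
      exact hs
    rw [ArithmeticFunction.cardFactors_apply_prime_pow hp]
    push_cast
    refine le_trans (mul_le_mul_of_nonneg_left ?_ (Nat.cast_nonneg _)) h1
    have : 1 / (p : ℝ) ≤ n / Y := by
      apply div_le_div₀ (by positivity) (by exact_mod_cast hn) hY0 hYp'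
    linarith
  | coprime a b ha hb hab iha ihb =>
    have ha0 : a ≠ 0 := by omega
    have hb0 : b ≠ 0 := by omega
    have iha := iha ha0 (fun p hp hd => h p hp (hd.mul_right b))
    have ihb := ihb hb0 (fun p hp hd => h p hp (hd.mul_left a))
    rw [sigma1_mul hab, ArithmeticFunction.cardFactors_mul ha0 hb0]
    push_cast
    rw [add_div]
    set u := (ArithmeticFunction.cardFactors a : ℝ) / Y with hu
    set v := (ArithmeticFunction.cardFactors b : ℝ) / Y with hv
    have hu0 : 0 ≤ u := by positivity
    have hv0 : 0 ≤ v := by positivity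
    by_cases hc : u + v ≤ 1
    · calc (sigma1 a : ℝ) * sigma1 b * (1 - (u + v))
          ≤ (sigma1 a : ℝ) * sigma1 b * ((1 - u) * (1 - v)) := by
            apply mul_le_mul_of_nonneg_left _ (by positivity)
            nlinarith [mul_nonneg hu0 hv0]
        _ = (sigma1 a * (1 - u)) * (sigma1 b * (1 - v)) := by ring
        _ ≤ a * b := by
            apply mul_le_mul iha ihb _ (by positivity)
            exact mul_nonneg (by positivity) (by linarith)
    · push Not at hc
      have : (sigma1 a : ℝ) * sigma1 b * (1 - (u + v)) ≤ 0 :=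
        mul_nonpos_of_nonneg_of_nonpos (by positivity) (by linarith)
      exact this.trans (by positivity)

theorem not_dvd_sigma1 (Y d : ℕ) (hd : 1 < d) (h : ∀ p, p.Prime → p ∣ d → Y ≤ p)
    (hO : 2 * ArithmeticFunction.cardFactors d < Y) : ¬ d ∣ sigma1 d := by
  have hY : 0 < Y := by omega
  have h1 := sigma1_rough Y hY d (by omega) h
  have hlt : (sigma1 d : ℝ) < 2 * d := by
    have hY0 : (0 : ℝ) < Y := by exact_mod_cast hY
    have h2 : (ArithmeticFunction.cardFactors d : ℝ) / Y < 1 / 2 := by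
      rw [div_lt_div_iff₀ hY0 (by norm_num)]
      have : ((2 * ArithmeticFunction.cardFactors d : ℕ) : ℝ) < Y := by exact_mod_cast hO
      push_cast at this
      linarith
    have h3 : (0 : ℝ) < sigma1 d := by exact_mod_cast sigma1_pos (by omega)
    nlinarith
  have hlt' : sigma1 d < 2 * d := by exact_mod_cast hlt
  rintro ⟨k, hk⟩
  have := sigma1_gt hd
  rw [hk] at this hlt'
  have h4 : 1 < k := by
    by_contra hc
    have : k ≤ 1 := by omega
    nlinarith
  nlinarith

/-- Wirsing's argument: few integers of a hereditary family have a given value of `σ(B)/B`. -/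
theorem count_rough (N : ℕ) : ∀ (β : ℚ) (F : Finset ℕ),
    (∀ B ∈ F, B ≠ 0 ∧ ArithmeticFunction.cardFactors B ≤ N ∧ (sigma1 B : ℚ) / B = β ∧
      ∀ d, d ∣ B → 1 < d → ¬ d ∣ sigma1 d) → F.card ≤ 2 ^ N := by
  induction N using Nat.strong_induction_on with
  | _ N ih =>
  intro β F hF
  by_cases hden : β.den = 1
  · have : F ⊆ {1} := by
      intro B hB
      obtain ⟨h0, -, hβ, hd⟩ := hF B hB
      rw [Finset.mem_singleton]
      by_contra h1
      apply hd B dvd_rfl (by omega)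
      have hB0 : (B : ℚ) ≠ 0 := by exact_mod_cast h0
      rw [div_eq_iff hB0] at hβ
      have h2 : (β.num : ℚ) = β := by
        exact (Rat.den_eq_one_iff β).mp hden
      rw [← h2] at hβ
      have h3 : (sigma1 B : ℤ) = β.num * B := by exact_mod_cast hβ
      exact Int.natCast_dvd_natCast.mp ⟨β.num, by rw [h3]; ring⟩
    calc F.card ≤ 1 := by simpa using Finset.card_le_card this
      _ ≤ 2 ^ N := Nat.one_le_two_pow
  · set p := β.den.minFac with hp
    have hpp : p.Prime := Nat.minFac_prime hden
    have hpB : ∀ B ∈ F, p ∣ B := by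
      intro B hB
      obtain ⟨h0, -, hβ, hd⟩ := hF B hB
      refine (Nat.minFac_dvd _).trans ?_
      rw [← hβ]
      have := Rat.den_dvd (sigma1 B : ℤ) (B : ℤ)
      have h2 : Rat.divInt (sigma1 B : ℤ) (B : ℤ) = (sigma1 B : ℚ) / B := by
        rw [Rat.divInt_eq_div]; push_cast; rfl
      rw [h2] at this
      exact_mod_cast this
    have hv : ∀ B ∈ F, B.factorization p ∈ Finset.Icc 1 N := by
      intro B hB
      obtain ⟨h0, hO, hβ, hd⟩ := hF B hB
      rw [Finset.mem_Icc]
      constructor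
      · exact (hpp.dvd_iff_one_le_factorization h0).mp (hpB B hB)
      · refine le_trans ?_ hO
        have := ArithmeticFunction.cardFactors_mul (m := p ^ B.factorization p)
          (n := B / p ^ B.factorization p) (pow_ne_zero _ hpp.ne_zero)
          (Nat.ordCompl_pos p h0).ne'
        rw [Nat.ordProj_mul_ordCompl_eq_self,
          ArithmeticFunction.cardFactors_apply_prime_pow hpp] at this
        omega
    rw [Finset.card_eq_sum_card_fiberwise hv]
    have hfib : ∀ e ∈ Finset.Icc 1 N,
        (F.filter (fun B => B.factorization p = e)).card ≤ 2 ^ (N - e) := by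
      intro e he
      rw [Finset.mem_Icc] at he
      have hinj : Set.InjOn (fun B => B / p ^ e)
          (F.filter (fun B => B.factorization p = e) : Finset ℕ) := by
        intro B hB C hC hBC
        simp only [Finset.coe_filter, Set.mem_ofPred_eq] at hB hC hBC
        have h1 := Nat.ordProj_mul_ordCompl_eq_self B p
        have h2 := Nat.ordProj_mul_ordCompl_eq_self C p
        rw [hB.2] at h1
        rw [hC.2] at h2
        rw [← h1, ← h2, hBC]
      rw [← Finset.card_image_of_injOn hinj]
      refine ih (N - e) (by omega) (β / ((sigma1 (p ^ e) : ℚ) / (p ^ e : ℕ))) _ ?_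
      intro C hC
      rw [Finset.mem_image] at hC
      obtain ⟨B, hB, rfl⟩ := hC
      rw [Finset.mem_filter] at hB
      obtain ⟨hB, hBe⟩ := hB
      obtain ⟨h0, hO, hβ, hd⟩ := hF B hB
      have h1 := Nat.ordProj_mul_ordCompl_eq_self B p
      have hc0 := (Nat.ordCompl_pos p h0).ne'
      have hcop := Nat.coprime_ordCompl hpp h0
      rw [hBe] at h1 hc0 hcop
      have hpe : p ^ e ≠ 0 := pow_ne_zero _ hpp.ne_zero
      have hcop' : Nat.Coprime (p ^ e) (B / p ^ e) := Nat.Coprime.pow_left e hcop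
      set C := B / p ^ e with hC
      refine ⟨hc0, ?_, ?_, ?_⟩
      · rw [← h1, ArithmeticFunction.cardFactors_mul hpe hc0,
          ArithmeticFunction.cardFactors_apply_prime_pow hpp] at hO
        omega
      · rw [← hβ, ← h1, sigma1_mul hcop']
        have e1 : ((p ^ e : ℕ) : ℚ) ≠ 0 := by exact_mod_cast hpe
        have e2 : (C : ℚ) ≠ 0 := by exact_mod_cast hc0
        have e3 : (sigma1 (p ^ e) : ℚ) ≠ 0 := by exact_mod_cast (sigma1_pos hpe).ne'
        rw [Nat.cast_mul, Nat.cast_mul]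
        field_simp
      · intro d hdC
        exact hd d (hdC.trans ⟨p ^ e, by rw [mul_comm]; exact h1.symm⟩)
    refine (Finset.sum_le_sum hfib).trans ?_
    have hsum : ∀ n : ℕ, ∑ e ∈ Finset.Icc 1 n, 2 ^ (n - e) + 1 = 2 ^ n := by
      intro n
      induction n with
      | zero => simp
      | succ n ihn =>
        rw [Finset.sum_Icc_succ_top (by omega), pow_succ, ← ihn]
        have : ∑ e ∈ Finset.Icc 1 n, 2 ^ (n + 1 - e) = ∑ e ∈ Finset.Icc 1 n, 2 ^ (n - e) * 2 := by
          apply Finset.sum_congr rfl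
          intro e he
          rw [Finset.mem_Icc] at he
          rw [← pow_succ]
          congr 1
          omega
        rw [this, ← Finset.sum_mul]
        simp
        ring
    have := hsum N
    omega

theorem pow_cardFactors_le (Y B : ℕ) (h0 : B ≠ 0) (h : ∀ p, p.Prime → p ∣ B → Y ≤ p) :
    Y ^ ArithmeticFunction.cardFactors B ≤ B := by
  conv_rhs => rw [← Nat.prod_primeFactorsList h0]
  rw [ArithmeticFunction.cardFactors_apply]
  apply List.pow_card_le_prod
  intro p hp
  exact h p (Nat.prime_of_mem_primeFactorsList hp) (Nat.dvd_of_mem_primeFactorsList hp)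

/-- Part of `m` composed of the primes below `Y`. -/
def smoothPart (Y m : ℕ) : ℕ := (m.primeFactorsList.filter (fun p => decide (p < Y))).prod
/-- Part of `m` composed of the primes at least `Y`. -/
def roughPart (Y m : ℕ) : ℕ := (m.primeFactorsList.filter (fun p => !decide (p < Y))).prod

theorem smoothPart_mul_roughPart (Y m : ℕ) (h : m ≠ 0) : smoothPart Y m * roughPart Y m = m := by
  unfold smoothPart roughPart
  conv_rhs => rw [← Nat.prod_primeFactorsList h]
  rw [← List.prod_append]
  exact (List.filter_append_perm _ _).prod_eq

theorem prime_dvd_list {p : ℕ} (hp : p.Prime) {l : List ℕ} (hl : ∀ q ∈ l, q.Prime)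
    (h : p ∣ l.prod) : p ∈ l := by
  obtain ⟨q, hq, hpq⟩ := (Prime.dvd_prod_iff hp.prime).mp h
  rwa [(Nat.prime_dvd_prime_iff_eq hp (hl q hq)).mp hpq]

theorem roughPart_prime (Y m p : ℕ) (hp : p.Prime) (h : p ∣ roughPart Y m) : Y ≤ p := by
  have := prime_dvd_list hp (fun q hq =>
    Nat.prime_of_mem_primeFactorsList (List.mem_of_mem_filter hq)) h
  have := List.of_mem_filter this
  simpa using this

theorem smoothPart_prime (Y m p : ℕ) (hp : p.Prime) (h : p ∣ smoothPart Y m) : p < Y := by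
  have := prime_dvd_list hp (fun q hq =>
    Nat.prime_of_mem_primeFactorsList (List.mem_of_mem_filter hq)) h
  have := List.of_mem_filter this
  simpa using this

theorem parts_coprime (Y m : ℕ) : Nat.Coprime (smoothPart Y m) (roughPart Y m) := by
  apply Nat.Coprime.symm
  apply Nat.coprime_of_dvd
  intro p hp h1 h2
  have := roughPart_prime Y m p hp h1
  have := smoothPart_prime Y m p hp h2
  omega

theorem count_fiber (Y N X : ℕ) (hYN : 2 * N < Y)
    (hN : ∀ k, Y ^ k ≤ X → k ≤ N) (α : ℝ) :
    ((Finset.Icc 1 X).filter (fun m => (sigma1 m : ℝ) / (m : ℝ) = α)).card ≤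
      2 ^ N * ((Finset.Icc 1 X).filter (fun m => m ∈ Nat.smoothNumbers Y)).card := by
  set S := (Finset.Icc 1 X).filter (fun m => (sigma1 m : ℝ) / (m : ℝ) = α) with hS
  have hSm : ∀ m ∈ S, m ≠ 0 ∧ m ≤ X ∧ (sigma1 m : ℝ) / (m : ℝ) = α := by
    intro m hm
    rw [hS, Finset.mem_filter, Finset.mem_Icc] at hm
    exact ⟨by omega, hm.1.2, hm.2⟩
  apply Finset.card_le_mul_card_image_of_maps_to (f := smoothPart Y)
  · intro m hm
    obtain ⟨h0, hX, -⟩ := hSm m hm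
    have hmul := smoothPart_mul_roughPart Y m h0
    have hs0 : smoothPart Y m ≠ 0 := by
      intro hc; rw [hc] at hmul; simp at hmul; omega
    have hr0 : roughPart Y m ≠ 0 := by
      intro hc; rw [hc] at hmul; simp at hmul; omega
    rw [Finset.mem_filter, Finset.mem_Icc]
    refine ⟨⟨by omega, ?_⟩, ?_⟩
    · refine le_trans ?_ hX
      exact Nat.le_of_dvd (by omega) ⟨_, hmul.symm⟩
    · exact Nat.prod_mem_smoothNumbers m Y
  · intro a ha
    by_cases hne : (S.filter (fun m => smoothPart Y m = a)).Nonempty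
    swap
    · rw [Finset.not_nonempty_iff_eq_empty] at hne
      rw [hne]; simp
    obtain ⟨m₀, hm₀⟩ := hne
    have key : ∀ m ∈ S.filter (fun m => smoothPart Y m = a), a * roughPart Y m = m ∧
        a ≠ 0 ∧ roughPart Y m ≠ 0 ∧ m ≤ X ∧
        (sigma1 (roughPart Y m) : ℝ) / roughPart Y m = α * a / sigma1 a := by
      intro m hm
      rw [Finset.mem_filter] at hm
      obtain ⟨hm, rfl⟩ := hm
      obtain ⟨h0, hX, hα⟩ := hSm m hm
      have hmul := smoothPart_mul_roughPart Y m h0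
      have hs0 : smoothPart Y m ≠ 0 := by
        intro hc; rw [hc] at hmul; simp at hmul; omega
      have hr0 : roughPart Y m ≠ 0 := by
        intro hc; rw [hc] at hmul; simp at hmul; omega
      refine ⟨hmul, hs0, hr0, hX, ?_⟩
      rw [← hα]
      have e1 : sigma1 m = sigma1 (smoothPart Y m) * sigma1 (roughPart Y m) := by
        conv_lhs => rw [← hmul]
        exact sigma1_mul (parts_coprime Y m)
      have e2 : (m : ℝ) = smoothPart Y m * roughPart Y m := by exact_mod_cast hmul.symm
      rw [e1, e2]
      have e3 : (smoothPart Y m : ℝ) ≠ 0 := by exact_mod_cast hs0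
      have e4 : (roughPart Y m : ℝ) ≠ 0 := by exact_mod_cast hr0
      have e5 : (sigma1 (smoothPart Y m) : ℝ) ≠ 0 := by exact_mod_cast (sigma1_pos hs0).ne'
      push_cast
      field_simp
    have hinj : Set.InjOn (roughPart Y) (S.filter (fun m => smoothPart Y m = a) : Finset ℕ) := by
      intro m hm n hn hmn
      rw [← (key m hm).1, ← (key n hn).1, hmn]
    rw [← Finset.card_image_of_injOn hinj]
    apply count_rough N ((sigma1 (roughPart Y m₀) : ℚ) / roughPart Y m₀)
    intro B hB
    rw [Finset.mem_image] at hB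
    obtain ⟨m, hm, rfl⟩ := hB
    obtain ⟨k1, k2, k3, k4, k5⟩ := key m hm
    have hOm : ArithmeticFunction.cardFactors (roughPart Y m) ≤ N := by
      apply hN
      refine (pow_cardFactors_le Y _ k3 (roughPart_prime Y m)).trans (le_trans ?_ k4)
      exact Nat.le_of_dvd (by rw [← k1]; positivity) ⟨a, by rw [mul_comm]; exact k1.symm⟩
    refine ⟨k3, hOm, ?_, ?_⟩
    · have := k5.trans (key m₀ hm₀).2.2.2.2.symm
      rw [← Rat.cast_inj (α := ℝ)]
      push_cast
      exact this
    · intro d hd h1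
      apply not_dvd_sigma1 Y d h1
      · intro p hp hpd
        exact roughPart_prime Y m p hp (hpd.trans hd)
      · obtain ⟨c, hc⟩ := hd
        rw [hc] at k3 hOm
        rw [ArithmeticFunction.cardFactors_mul (left_ne_zero_of_mul k3)
          (right_ne_zero_of_mul k3)] at hOm
        omega

/-- Rankin's bound for smooth numbers. -/
theorem rankin (Y : ℕ) (x s : ℝ) (hx : 1 ≤ x) (hs : 0 < s) :
    (((Finset.Icc 1 ⌊x⌋₊).filter (fun m => m ∈ Nat.smoothNumbers Y)).card : ℝ) ≤
      x ^ s * ∏ p ∈ Y.primesBelow, (1 - (p : ℝ) ^ (-s))⁻¹ := by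
  let f : ℕ →* ℝ :=
    { toFun := fun n => (n : ℝ) ^ (-s)
      map_one' := by simp
      map_mul' := fun a b => by
        push_cast
        exact Real.mul_rpow (Nat.cast_nonneg a) (Nat.cast_nonneg b) }
  have hf : ∀ n : ℕ, f n = (n : ℝ) ^ (-s) := fun n => rfl
  have hf0 : ∀ n : ℕ, 0 ≤ f n := fun n => Real.rpow_nonneg (Nat.cast_nonneg n) _
  have h1 : ∀ {p : ℕ}, p.Prime → ‖f p‖ < 1 := by
    intro p hp
    rw [Real.norm_of_nonneg (hf0 p), hf]
    exact Real.rpow_lt_one_of_one_lt_of_neg (by exact_mod_cast hp.one_lt) (by linarith)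
  have h2 := (EulerProduct.summable_and_hasSum_smoothNumbers_prod_primesBelow_geometric h1 Y).2
  set T := (Finset.Icc 1 ⌊x⌋₊).filter (fun m => m ∈ Nat.smoothNumbers Y) with hT
  have h3 : ∑ m ∈ T, f m ≤ ∏ p ∈ Y.primesBelow, (1 - f p)⁻¹ := by
    have := sum_le_hasSum (T.subtype (fun m => m ∈ Nat.smoothNumbers Y))
      (fun i _ => hf0 i) h2
    rw [Finset.sum_subtype_of_mem (fun m => f m)] at this
    · exact this
    · intro m hm
      exact (Finset.mem_filter.mp hm).2
  have h4 : (T.card : ℝ) ≤ ∑ m ∈ T, x ^ s * f m := by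
    rw [Finset.card_eq_sum_ones]
    push_cast
    apply Finset.sum_le_sum
    intro m hm
    rw [hT, Finset.mem_filter, Finset.mem_Icc] at hm
    have hm0 : (0 : ℝ) < m := by exact_mod_cast hm.1.1
    have hmx : (m : ℝ) ≤ x := (Nat.le_floor_iff (by linarith)).mp hm.1.2
    rw [hf, Real.rpow_neg hm0.le, ← div_eq_mul_inv, one_le_div (Real.rpow_pos_of_pos hm0 s)]
    exact Real.rpow_le_rpow hm0.le hmx hs.le
  rw [← Finset.mul_sum] at h4
  exact h4.trans (mul_le_mul_of_nonneg_left h3 (Real.rpow_nonneg (by linarith) _))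

theorem factor_bound (t : ℝ) (ht : 0 < t) : (1 - Real.exp (-t))⁻¹ ≤ 1 + 1 / t := by
  have h1 : Real.exp (-t) ≤ 1 / (1 + t) := by
    rw [Real.exp_neg, ← one_div]
    exact one_div_le_one_div_of_le (by linarith) (by linarith [Real.add_one_le_exp t])
  have h2 : t / (1 + t) ≤ 1 - Real.exp (-t) := by
    have : t / (1 + t) = 1 - 1 / (1 + t) := by field_simp; ring
    linarith
  have h3 : 0 < t / (1 + t) := by positivity
  calc (1 - Real.exp (-t))⁻¹ ≤ (t / (1 + t))⁻¹ := inv_anti₀ h3 h2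
    _ = 1 + 1 / t := by field_simp; ring

/-- Bound for the Euler product with exponent `1/u`, `u = log L`. -/
theorem prod_bound (Y : ℕ) (u : ℝ) (hu : 0 < u) :
    ∏ p ∈ Y.primesBelow, (1 - (p : ℝ) ^ (-(1 / u)))⁻¹ ≤
      Real.exp (2 * Y) * Real.exp (2 * u * Real.exp (u / 2)) := by
  have h1 : ∀ p ∈ Y.primesBelow, (1 - (p : ℝ) ^ (-(1 / u)))⁻¹ ≤
      Real.exp 2 * (if (p : ℝ) < Real.exp (u / 2) then Real.exp (2 * u) else 1) := by
    intro p hp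
    have hpp := Nat.prime_of_mem_primesBelow hp
    have hp2 : (2 : ℝ) ≤ p := by exact_mod_cast hpp.two_le
    have hlog2 : (1 : ℝ) / 2 ≤ Real.log p := by
      have := Real.log_le_log (by norm_num) hp2
      linarith [Real.log_two_gt_d9]
    have e1 : (p : ℝ) ^ (-(1 / u)) = Real.exp (-(Real.log p / u)) := by
      rw [Real.rpow_def_of_pos (by linarith)]
      congr 1
      ring
    rw [e1]
    refine (factor_bound _ (by positivity)).trans ?_
    rw [one_div_div]
    have he2 : (3 : ℝ) ≤ Real.exp 2 := by linarith [Real.add_one_le_exp (2 : ℝ)]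
    split_ifs with hc
    · have : u / Real.log p ≤ 2 * u := by
        rw [div_le_iff₀ (by linarith)]
        nlinarith
      have h5 := Real.add_one_le_exp (2 * u)
      nlinarith [Real.exp_pos (2 * u)]
    · push Not at hc
      have h5 : u / 2 ≤ Real.log p := (Real.le_log_iff_exp_le (by linarith)).mpr hc
      have : u / Real.log p ≤ 2 := by
        rw [div_le_iff₀ (by linarith)]
        linarith
      linarith
  have hnn : ∀ p ∈ Y.primesBelow, 0 ≤ (1 - (p : ℝ) ^ (-(1 / u)))⁻¹ := by
    intro p hp
    have hpp := Nat.prime_of_mem_primesBelow hp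
    apply inv_nonneg.mpr
    have := Real.rpow_le_one_of_one_le_of_nonpos (x := (p : ℝ)) (z := -(1 / u))
      (by exact_mod_cast hpp.one_lt.le) (by
        have : 0 < 1 / u := by positivity
        linarith)
    linarith
  refine (Finset.prod_le_prod hnn h1).trans ?_
  rw [Finset.prod_mul_distrib]
  apply mul_le_mul _ _ (Finset.prod_nonneg (fun p _ => by split_ifs <;> positivity)) (by positivity)
  · rw [Finset.prod_const, ← Real.exp_nat_mul]
    apply Real.exp_le_exp.mpr
    have : (Y.primesBelow.card : ℝ) ≤ Y := by
      have : Y.primesBelow.card ≤ (Finset.range Y).card :=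
        Finset.card_le_card (Finset.filter_subset _ _)
      rw [Finset.card_range] at this
      exact_mod_cast this
    linarith
  · rw [← Finset.prod_filter, Finset.prod_const, ← Real.exp_nat_mul]
    apply Real.exp_le_exp.mpr
    have : (((Y.primesBelow).filter (fun p : ℕ => (p : ℝ) < Real.exp (u / 2))).card : ℝ) ≤
        Real.exp (u / 2) := by
      have h7 : (Y.primesBelow).filter (fun p : ℕ => (p : ℝ) < Real.exp (u / 2)) ⊆
          Finset.Icc 1 ⌊Real.exp (u / 2)⌋₊ := by
        intro p hp
        rw [Finset.mem_filter] at hp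
        rw [Finset.mem_Icc]
        exact ⟨(Nat.prime_of_mem_primesBelow hp.1).one_lt.le, Nat.le_floor hp.2.le⟩
      have h8 := Finset.card_le_card h7
      rw [Nat.card_Icc] at h8
      calc _ ≤ ((⌊Real.exp (u / 2)⌋₊ : ℕ) : ℝ) := by exact_mod_cast h8
        _ ≤ _ := Nat.floor_le (Real.exp_pos _).le
    nlinarith

theorem wirsing_popularity_bound :
    ∃ lam₀ : ℝ, 0 < lam₀ ∧ ∀ x : ℝ, 3 ≤ x → ∀ α : ℝ,
      (((Finset.Icc 1 ⌊x⌋₊).filter (fun m => (sigma1 m : ℝ) / (m : ℝ) = α)).card : ℝ)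
        ≤ Real.exp (lam₀ * Real.log x / Real.log (Real.log x)) := by
  refine ⟨31, by norm_num, ?_⟩
  intro x hx α
  set L := Real.log x with hL
  have hL1 : 1 < L := by
    rw [hL, Real.lt_log_iff_exp_lt (by linarith)]
    linarith [Real.exp_one_lt_d9]
  set u := Real.log L with hu
  have hu0 : 0 < u := Real.log_pos hL1
  have hLu : L = Real.exp u := (Real.exp_log (by linarith)).symm
  set E := Real.exp (u / 2) with hE
  have hEE : L = E * E := by rw [hLu, hE, ← Real.exp_add]; congr 1; ring
  have hE1 : u / 2 + 1 ≤ E := Real.add_one_le_exp _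
  have hE2 : (u / 2) ^ 2 / 2 ≤ E := by
    have := Real.quadratic_le_exp_of_nonneg (x := u / 2) (by positivity)
    linarith
  set U := L / u with hU
  have hUL : U * u = L := by rw [hU]; field_simp
  have hU1 : 1 ≤ U := by
    rw [hU, one_le_div hu0]
    linarith [Real.log_le_sub_one_of_pos (show 0 < L by linarith)]
  set Y := ⌈5 * U⌉₊ with hY
  have hY1 : 5 * U ≤ Y := Nat.le_ceil _
  have hY2 : (Y : ℝ) ≤ 6 * U := by
    have := Nat.ceil_lt_add_one (show 0 ≤ 5 * U by linarith)
    linarith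
  have hEY : E ≤ Y := by
    refine le_trans ?_ hY1
    rw [hU, ← mul_div_assoc, le_div_iff₀ hu0, hEE]
    nlinarith
  have hlogY : u / 2 ≤ Real.log Y := by
    rw [Real.le_log_iff_exp_le (by linarith)]
    exact hEY
  set N := ⌊2 * U⌋₊ with hN
  have hN1 : (N : ℝ) ≤ 2 * U := Nat.floor_le (by linarith)
  have hYN : 2 * N < Y := by
    have : ((2 * N : ℕ) : ℝ) < Y := by push_cast; linarith
    exact_mod_cast this
  have hNk : ∀ k, Y ^ k ≤ ⌊x⌋₊ → k ≤ N := by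
    intro k hk
    have h1 : ((Y ^ k : ℕ) : ℝ) ≤ x := (Nat.le_floor_iff (by linarith)).mp hk
    push_cast at h1
    have h2 := Real.log_le_log (pow_pos (by linarith) k) h1
    rw [Real.log_pow, ← hL] at h2
    apply Nat.le_floor
    rw [hU, ← mul_div_assoc, le_div_iff₀ hu0]
    have : (k : ℝ) * (u / 2) ≤ k * Real.log Y :=
      mul_le_mul_of_nonneg_left hlogY (Nat.cast_nonneg k)
    linarith
  have h1 := count_fiber Y N ⌊x⌋₊ hYN hNk α
  have h2 := rankin Y x (1 / u) (by linarith) (by positivity)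
  have h3 := prod_bound Y u hu0
  have hxs : x ^ (1 / u) = Real.exp U := by
    rw [Real.rpow_def_of_pos (by linarith), ← hL, hU]
    congr 1
    ring
  have h2N : (2 : ℝ) ^ N ≤ Real.exp (2 * U) := by
    calc (2 : ℝ) ^ N ≤ (Real.exp 1) ^ N := by
          gcongr
          linarith [Real.add_one_le_exp (1 : ℝ)]
      _ = Real.exp N := by rw [← Real.exp_nat_mul]; simp
      _ ≤ _ := Real.exp_le_exp.mpr hN1
  have hsm : 2 * u * E ≤ 16 * U := by
    rw [hU, ← mul_div_assoc, le_div_iff₀ hu0, hEE]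
    have : 0 < E := Real.exp_pos _
    nlinarith
  rw [hxs] at h2
  calc (((Finset.Icc 1 ⌊x⌋₊).filter (fun m => (sigma1 m : ℝ) / (m : ℝ) = α)).card : ℝ)
      ≤ 2 ^ N * (((Finset.Icc 1 ⌊x⌋₊).filter (fun m => m ∈ Nat.smoothNumbers Y)).card : ℝ) := by
        exact_mod_cast h1
    _ ≤ Real.exp (2 * U) * (Real.exp U * (Real.exp (2 * Y) * Real.exp (2 * u * E))) := by
        apply mul_le_mul h2N _ (Nat.cast_nonneg _) (Real.exp_pos _).le
        exact h2.trans (mul_le_mul_of_nonneg_left h3 (Real.exp_pos _).le)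
    _ ≤ Real.exp (31 * L / u) := by
        rw [← Real.exp_add, ← Real.exp_add, ← Real.exp_add]
        apply Real.exp_le_exp.mpr
        rw [mul_div_assoc, ← hU]
        linarith
end

section
/- There exist a constant C > 0, a real number x₀, and for each real x ≥ x₀ a set E(x) of positive integers at most x, such that #E(x) = o(x) as x → ∞, and for every real x ≥ x₀ and every positive integer d ≤ x^{1/(2 log log log x)}, the number of integers n with 1 ≤ n ≤ x, n ∉ E(x), and d ∣ s(n) is at most C·x/d^{0.9}. -/
open scoped Classical
open Filter Finset

/-- `s n` is the sum of the proper divisors of `n`, i.e. `σ(n) − n`. -/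
def s (n : ℕ) : ℕ := sigma1 n - n

lemma card_mult_eq (N p : ℕ) : ((Icc 1 N).filter (fun n => p ∣ n)).card = N / p := by
  have h := Nat.Ioc_filter_dvd_card_eq_div N p
  have e : Icc 1 N = Ioc 0 N := by ext x; simp [Nat.succ_le_iff]
  rw [e]; convert h

lemma card_mult_le (N p : ℕ) :
    (((Icc 1 N).filter (fun n => p ∣ n)).card : ℝ) ≤ (N : ℝ) / p := by
  rw [card_mult_eq]; exact Nat.cast_div_le

lemma card_mult_ge (N p : ℕ) (hp : 0 < p) :
    (N : ℝ) / p - 1 ≤ (((Icc 1 N).filter (fun n => p ∣ n)).card : ℝ) := by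
  rw [card_mult_eq]
  have h : (N : ℝ) / p < ((N / p : ℕ) : ℝ) + 1 := by
    rw [div_lt_iff₀ (by exact_mod_cast hp)]
    exact_mod_cast Nat.lt_mul_of_div_lt (Nat.lt_succ_self _) hp
  linarith

/-- number of elements of `S` dividing `n` -/
def om (S : Finset ℕ) (n : ℕ) : ℕ := (S.filter (fun p => p ∣ n)).card

lemma om_eq (S : Finset ℕ) (n : ℕ) : (om S n : ℝ) = ∑ p ∈ S, if p ∣ n then (1:ℝ) else 0 := by
  simp [om]

lemma turan (S : Finset ℕ) (hS : ∀ p ∈ S, p.Prime) (N : ℕ) (hN : S.card ≤ N) (L : ℝ)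
    (hL : L = ∑ p ∈ S, (1 / (p:ℝ))) (hpos : 0 < L) :
    (((Icc 1 N).filter (fun n => (om S n : ℝ) < L / 2)).card : ℝ) ≤ 12 * N / L := by
  have hA : (N:ℝ) * L - S.card ≤ ∑ n ∈ Icc 1 N, (om S n : ℝ) := by
    simp_rw [om_eq]
    rw [Finset.sum_comm]
    have : (N:ℝ) * L - S.card = ∑ p ∈ S, ((N:ℝ) / p - 1) := by
      rw [Finset.sum_sub_distrib, hL, Finset.mul_sum]; simp [div_eq_mul_inv]
    rw [this]
    refine Finset.sum_le_sum fun p hp => ?_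
    have := card_mult_ge N p (hS p hp).pos
    simpa using this
  have hB : ∑ n ∈ Icc 1 N, (om S n : ℝ)^2 ≤ N * L^2 + N * L := by
    have e1 : ∑ n ∈ Icc 1 N, (om S n : ℝ)^2 = ∑ p ∈ S, ∑ q ∈ S,
        (((Icc 1 N).filter (fun n => p ∣ n ∧ q ∣ n)).card : ℝ) := by
      simp_rw [om_eq, sq, Finset.sum_mul_sum]
      rw [Finset.sum_comm]
      refine Finset.sum_congr rfl fun p _ => ?_
      rw [Finset.sum_comm]
      refine Finset.sum_congr rfl fun q _ => ?_
      rw [Finset.card_filter]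
      push_cast
      refine Finset.sum_congr rfl fun n _ => ?_
      by_cases h1 : p ∣ n <;> by_cases h2 : q ∣ n <;> simp [h1, h2]
    have e2 : N * L^2 + N * L = ∑ p ∈ S, ∑ q ∈ S,
        ((N:ℝ) * (1 / p * (1/q)) + if p = q then (N:ℝ) * (1/p) else 0) := by
      simp_rw [Finset.sum_add_distrib]
      congr 1
      · rw [hL, sq, Finset.sum_mul_sum, Finset.mul_sum]
        refine Finset.sum_congr rfl fun p _ => ?_
        rw [Finset.mul_sum]
      · rw [hL, Finset.mul_sum]
        refine Finset.sum_congr rfl fun p hp => ?_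
        simp [hp]
    rw [e1, e2]
    refine Finset.sum_le_sum fun p hp => Finset.sum_le_sum fun q hq => ?_
    by_cases h : p = q
    · subst h
      have := card_mult_le N p
      simp only [and_self, if_true]
      have h2 : (0:ℝ) ≤ (N:ℝ) * (1 / p * (1/p)) := by positivity
      rw [div_eq_mul_one_div] at this
      linarith
    · have hc : Nat.Coprime p q := (Nat.coprime_primes (hS p hp) (hS q hq)).2 h
      have e3 : (Icc 1 N).filter (fun n => p ∣ n ∧ q ∣ n) = (Icc 1 N).filter (fun n => p * q ∣ n) := by
        ext n
        simp only [Finset.mem_filter, and_congr_right_iff]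
        intro _
        exact ⟨fun ⟨a, b⟩ => hc.mul_dvd_of_dvd_of_dvd a b,
          fun a => ⟨(dvd_mul_right p q).trans a, (dvd_mul_left q p).trans a⟩⟩
      rw [e3]
      have := card_mult_le N (p * q)
      simp only [h, if_false, add_zero]
      refine this.trans (le_of_eq ?_)
      push_cast
      rw [div_eq_mul_one_div, one_div_mul_one_div]
  have hC : (((Icc 1 N).filter (fun n => (om S n : ℝ) < L / 2)).card : ℝ) * (L^2/4) ≤
      ∑ n ∈ Icc 1 N, ((om S n : ℝ) - L)^2 := by
    rw [← nsmul_eq_mul, ← Finset.sum_const]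
    refine le_trans (Finset.sum_le_sum (g := fun n => ((om S n : ℝ) - L)^2) ?_) ?_
    · intro n hn
      have := (Finset.mem_filter.1 hn).2
      nlinarith
    · exact Finset.sum_le_sum_of_subset_of_nonneg (Finset.filter_subset _ _)
        fun _ _ _ => sq_nonneg _
  have hD : ∑ n ∈ Icc 1 N, ((om S n : ℝ) - L)^2 =
      ∑ n ∈ Icc 1 N, (om S n : ℝ)^2 - 2 * L * ∑ n ∈ Icc 1 N, (om S n : ℝ) + N * L^2 := by
    rw [Finset.mul_sum, ← Finset.sum_sub_distrib]
    have : (N:ℝ) * L^2 = ∑ n ∈ Icc 1 N, L^2 := by simp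
    rw [this, ← Finset.sum_add_distrib]
    exact Finset.sum_congr rfl fun n _ => by ring
  have hN' : (S.card : ℝ) ≤ N := by exact_mod_cast hN
  rw [le_div_iff₀ hpos]
  set c := (((Icc 1 N).filter (fun n => (om S n : ℝ) < L / 2)).card : ℝ)
  have : c * (L^2/4) ≤ 3 * N * L := by
    nlinarith [mul_le_mul_of_nonneg_left hA hpos.le, mul_le_mul_of_nonneg_left hN' hpos.le]
  have h5 : L * (c * L) ≤ L * (12 * N) := by linarith
  exact le_of_mul_le_mul_left h5 hpos

lemma sum_inv_sq_tail (y : ℕ) (hy : 0 < y) (z : ℕ) :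
    ∑ n ∈ Ioc y z, (1 / (n:ℝ)^2) ≤ 1 / (y:ℝ) := by
  have := sum_Ioc_inv_sq_le_sub (α := ℝ) hy.ne' (n := z)
  rcases le_total y z with h | h
  · have h1 := this h
    have h2 : (0:ℝ) ≤ (z:ℝ)⁻¹ := by positivity
    simp only [one_div]
    linarith
  · rw [Finset.Ioc_eq_empty (by omega)]; simp

/-- bad integers with respect to a prime set -/
noncomputable def Bad (S : Finset ℕ) (L : ℝ) (N : ℕ) : Finset ℕ :=
  (Icc 1 N).filter (fun n => (om S n : ℝ) < L / 2 ∨ ∃ p ∈ S, p ^ 2 ∣ n)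

lemma bad_card (S : Finset ℕ) (hS : ∀ p ∈ S, p.Prime) (y z : ℕ) (hy : 0 < y)
    (hyz : S ⊆ Ioc y z) (N : ℕ) (hN : S.card ≤ N) (L : ℝ)
    (hL : L = ∑ p ∈ S, (1 / (p:ℝ))) (hpos : 0 < L) :
    ((Bad S L N).card : ℝ) ≤ 12 * N / L + N / y := by
  have h1 : Bad S L N ⊆ (Icc 1 N).filter (fun n => (om S n : ℝ) < L / 2) ∪
      S.biUnion (fun p => (Icc 1 N).filter (fun n => p^2 ∣ n)) := by
    intro n hn
    simp only [Bad, Finset.mem_filter, Finset.mem_union, Finset.mem_biUnion] at hn ⊢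
    rcases hn with ⟨a, b | ⟨p, hp, hd⟩⟩
    · exact Or.inl ⟨a, b⟩
    · exact Or.inr ⟨p, hp, a, hd⟩
  have h2 := (Finset.card_le_card h1).trans (Finset.card_union_le _ _)
  have h3 := (Nat.cast_le (α := ℝ)).2 h2
  rw [Nat.cast_add] at h3
  refine h3.trans (add_le_add (turan S hS N hN L hL hpos) ?_)
  have h4 : ((S.biUnion (fun p => (Icc 1 N).filter (fun n => p^2 ∣ n))).card : ℝ) ≤
      ∑ p ∈ S, (((Icc 1 N).filter (fun n => p^2 ∣ n)).card : ℝ) := by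
    exact_mod_cast Finset.card_biUnion_le
  refine h4.trans ?_
  calc _ ≤ ∑ p ∈ S, (N:ℝ) * (1 / (p:ℝ)^2) := by
        refine Finset.sum_le_sum fun p _ => ?_
        have := card_mult_le N (p^2)
        push_cast at this
        rwa [div_eq_mul_one_div] at this
    _ ≤ ∑ p ∈ Ioc y z, (N:ℝ) * (1 / (p:ℝ)^2) :=
        Finset.sum_le_sum_of_subset_of_nonneg hyz fun _ _ _ => by positivity
    _ = N * ∑ p ∈ Ioc y z, (1 / (p:ℝ)^2) := by rw [Finset.mul_sum]
    _ ≤ N * (1 / y) := by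
        gcongr; exact sum_inv_sq_tail y hy z
    _ = N / y := by ring

lemma sigma1_ge (m : ℕ) (hm : 0 < m) : m ≤ sigma1 m := by
  rw [sigma1, ArithmeticFunction.sigma_one_apply]
  exact Finset.single_le_sum (f := fun i => i) (fun _ _ => Nat.zero_le _)
    (Nat.mem_divisors_self m hm.ne')

lemma sigma1_mul_prime (p m : ℕ) (hp : p.Prime) (hpm : ¬ p ∣ m) :
    sigma1 (p * m) = (p + 1) * sigma1 m := by
  have hc : Nat.Coprime p m := (Nat.Prime.coprime_iff_not_dvd hp).2 hpm
  unfold sigma1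
  rw [ArithmeticFunction.isMultiplicative_sigma.map_mul_of_coprime hc]
  congr 1
  rw [ArithmeticFunction.sigma_one_apply, hp.sum_divisors, add_comm]

lemma s_mul_prime (p m : ℕ) (hp : p.Prime) (hm : 0 < m) (hpm : ¬ p ∣ m) :
    s (p * m) = p * s m + sigma1 m := by
  have h1 := sigma1_ge m hm
  unfold s
  rw [sigma1_mul_prime p m hp hpm]
  obtain ⟨t, ht⟩ := Nat.exists_eq_add_of_le h1
  rw [ht, Nat.add_sub_cancel_left]
  have : (p+1) * (m + t) = p * m + (p * t + (m + t)) := by ring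
  rw [this, Nat.add_sub_cancel_left]

lemma card_class_le (a b r v : ℕ) (hr : 0 < r) (hab : a ≤ b) :
    (((Ioc a b).filter (fun x => x ≡ v [MOD r])).card : ℝ) ≤ ((b:ℝ) - a) / r + 1 := by
  have h := Nat.Ioc_filter_modEq_card a b hr v
  have h' : (((Ioc a b).filter (fun x => x ≡ v [MOD r])).card : ℤ) =
    max (⌊((b:ℚ) - v) / r⌋ - ⌊((a:ℚ) - v) / r⌋) 0 := by convert h
  have h1 : ((⌊((b:ℚ) - v) / r⌋ : ℤ) : ℚ) ≤ ((b:ℚ) - v) / r := Int.floor_le _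
  have h2 : ((a:ℚ) - v) / r < (⌊((a:ℚ) - v) / r⌋ : ℤ) + 1 := Int.lt_floor_add_one _
  have hr' : (0:ℚ) < r := by exact_mod_cast hr
  have hab' : (a:ℚ) ≤ b := by exact_mod_cast hab
  have e : ((b:ℚ) - v) / r - ((a:ℚ) - v) / r = ((b:ℚ) - a) / r := by ring
  have h3 : (((Ioc a b).filter (fun x => x ≡ v [MOD r])).card : ℚ) ≤ ((b:ℚ) - a) / r + 1 := by
    have h4 : (((Ioc a b).filter (fun x => x ≡ v [MOD r])).card : ℚ) =
      ((max (⌊((b:ℚ) - v) / r⌋ - ⌊((a:ℚ) - v) / r⌋) 0 : ℤ) : ℚ) := by exact_mod_cast h'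
    rw [h4]
    push_cast
    refine max_le ?_ ?_
    · linarith
    · have : 0 ≤ ((b:ℚ) - a) / r := div_nonneg (by linarith) hr'.le
      linarith
  have h5 := (Rat.cast_le (K := ℝ)).2 h3
  push_cast at h5
  exact h5

lemma class_count (d k m : ℕ) (hd : 0 < d) (hdk : d ≤ 2^k) (hm : 0 < m) :
    (((Ioc (2^k) (2^(k+1))).filter (fun p => d ∣ p * s m + sigma1 m)).card : ℝ) ≤
      ∑ g ∈ d.divisors, if g ∣ m then (2:ℝ)^(k+1) * g / d else 0 := by
  have hnn : ∀ g ∈ d.divisors, (0:ℝ) ≤ if g ∣ m then (2:ℝ)^(k+1) * g / d else 0 := by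
    intro g _; split_ifs <;> positivity
  rcases Finset.eq_empty_or_nonempty
    ((Ioc (2^k) (2^(k+1))).filter (fun p => d ∣ p * s m + sigma1 m)) with h | ⟨p0, hp0⟩
  · rw [h]; simpa using Finset.sum_nonneg hnn
  · have hp0d := (Finset.mem_filter.1 hp0).2
    have hg1 : Nat.gcd d (s m) ∣ d := Nat.gcd_dvd_left _ _
    have hg2 : Nat.gcd d (s m) ∣ s m := Nat.gcd_dvd_right _ _
    have hg0 : 0 < Nat.gcd d (s m) := Nat.gcd_pos_of_pos_left _ hd
    have hg3 : Nat.gcd d (s m) ∣ sigma1 m :=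
      (Nat.dvd_add_right (hg2.mul_left p0)).1 (hg1.trans hp0d)
    have hgm : Nat.gcd d (s m) ∣ m := by
      have h1 := sigma1_ge m hm
      have : sigma1 m = s m + m := by unfold s; omega
      rw [this] at hg3
      exact (Nat.dvd_add_right hg2).1 hg3
    set g := Nat.gcd d (s m) with hg
    have hgd : g ∈ d.divisors := Nat.mem_divisors.2 ⟨hg1, hd.ne'⟩
    refine le_trans ?_ (Finset.single_le_sum hnn hgd)
    rw [if_pos hgm]
    have hr : 0 < d / g := Nat.div_pos (Nat.le_of_dvd hd hg1) hg0
    have hsub : (Ioc (2^k) (2^(k+1))).filter (fun p => d ∣ p * s m + sigma1 m) ⊆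
        (Ioc (2^k) (2^(k+1))).filter (fun x => x ≡ p0 [MOD (d / g)]) := by
      intro p hp
      rw [Finset.mem_filter] at hp ⊢
      refine ⟨hp.1, ?_⟩
      have h1 : p * s m + sigma1 m ≡ p0 * s m + sigma1 m [MOD d] :=
        ((Nat.modEq_zero_iff_dvd).2 hp.2).trans ((Nat.modEq_zero_iff_dvd).2 hp0d).symm
      have h2 : p * s m ≡ p0 * s m [MOD d] := Nat.ModEq.add_right_cancel' _ h1
      exact Nat.ModEq.cancel_right_div_gcd hd h2
    have h1 := (Nat.cast_le (α := ℝ)).2 (Finset.card_le_card hsub)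
    refine h1.trans ((card_class_le _ _ _ p0 hr (Nat.pow_le_pow_right (by norm_num) (by omega))).trans ?_)
    have hgR : (0:ℝ) < g := by exact_mod_cast hg0
    have hdR : (0:ℝ) < d := by exact_mod_cast hd
    rw [Nat.cast_div hg1 hgR.ne']
    push_cast
    have hdk' : (d:ℝ) ≤ 2^k := by exact_mod_cast hdk
    have hg1' : (1:ℝ) ≤ g := by exact_mod_cast hg0
    rw [div_div_eq_mul_div, pow_succ, div_add_one hdR.ne']
    apply div_le_div_of_nonneg_right _ hdR.le
    nlinarith [pow_pos (two_pos (α := ℝ)) k]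

lemma pair_count (d k N : ℕ) (hd : 0 < d) (hdk : d ≤ 2^k) :
    ∑ m ∈ Icc 1 (N / 2^k),
      (((Ioc (2^k) (2^(k+1))).filter (fun p => d ∣ p * s m + sigma1 m)).card : ℝ) ≤
      2 * N * d.divisors.card / d := by
  have hdR : (0:ℝ) < d := by exact_mod_cast hd
  calc _ ≤ ∑ m ∈ Icc 1 (N / 2^k), ∑ g ∈ d.divisors,
        (if g ∣ m then (2:ℝ)^(k+1) * g / d else 0) :=
        Finset.sum_le_sum fun m hm => class_count d k m hd hdk (Finset.mem_Icc.1 hm).1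
    _ = ∑ g ∈ d.divisors, ∑ m ∈ Icc 1 (N / 2^k),
        (if g ∣ m then (2:ℝ)^(k+1) * g / d else 0) := Finset.sum_comm
    _ ≤ ∑ g ∈ d.divisors, (2 * N / d : ℝ) := by
        refine Finset.sum_le_sum fun g hg => ?_
        have hg0 : (0:ℝ) < g := by exact_mod_cast Nat.pos_of_mem_divisors hg
        rw [← Finset.sum_filter, Finset.sum_const, nsmul_eq_mul]
        have h1 := card_mult_le (N / 2^k) g
        have h2 : ((N / 2^k : ℕ) : ℝ) ≤ (N:ℝ) / 2^k := by
          have := Nat.cast_div_le (α := ℝ) (m := N) (n := 2^k)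
          push_cast at this; exact this
        have h3 : (((Icc 1 (N / 2^k)).filter (fun m => g ∣ m)).card : ℝ) ≤ (N:ℝ) / 2^k / g :=
          h1.trans (div_le_div_of_nonneg_right h2 hg0.le)
        calc _ ≤ (N:ℝ) / 2^k / g * ((2:ℝ)^(k+1) * g / d) := by gcongr
          _ = 2 * N / d := by rw [pow_succ]; field_simp
    _ = _ := by rw [Finset.sum_const, nsmul_eq_mul]; ring

lemma sum_Ioc_dyadic (f : ℕ → ℝ) (A n : ℕ) :
    ∑ p ∈ Ioc (2^A) (2^(A+n)), f p =
      ∑ k ∈ Ico A (A+n), ∑ p ∈ Ioc (2^k) (2^(k+1)), f p := by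
  induction n with
  | zero => simp
  | succ n ih =>
    rw [← add_assoc, Finset.sum_Ico_succ_top (by omega), ← ih,
      Finset.sum_Ioc_consecutive _ (Nat.pow_le_pow_right (by norm_num) (by omega))
        (Nat.pow_le_pow_right (by norm_num) (by omega))]

lemma window_count (S : Finset ℕ) (hS : ∀ p ∈ S, p.Prime) (A n : ℕ)
    (hsub : S ⊆ Ioc (2^A) (2^(A+n))) (L : ℝ) (hL : 2 ≤ L) (N d : ℕ) (hd : 0 < d)
    (hdA : d ≤ 2^A) :
    (((Icc 1 N).filter (fun n => n ∉ Bad S L N ∧ d ∣ s n)).card : ℝ) ≤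
      n * (2 * N * d.divisors.card / d) := by
  set G := (Icc 1 N).filter (fun n => n ∉ Bad S L N ∧ d ∣ s n) with hG
  have hGom : ∀ n ∈ G, (1:ℝ) ≤ om S n := by
    intro n hn
    rw [hG, Finset.mem_filter] at hn
    obtain ⟨h1, h2, _⟩ := hn
    simp only [Bad, Finset.mem_filter, not_and, not_or, not_lt] at h2
    linarith [(h2 h1).1]
  have h1 : (G.card : ℝ) ≤ ∑ n ∈ G, (om S n : ℝ) := by
    have : (G.card : ℝ) = ∑ n ∈ G, (1:ℝ) := by simp
    rw [this]; exact Finset.sum_le_sum hGom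
  have h2 : ∑ n ∈ G, (om S n : ℝ) = ∑ p ∈ S, ((G.filter (fun n => p ∣ n)).card : ℝ) := by
    simp_rw [om_eq]
    rw [Finset.sum_comm]
    simp
  have h3 : ∀ p ∈ S, ((G.filter (fun n => p ∣ n)).card : ℝ) ≤
      (((Icc 1 (N / p)).filter (fun m => d ∣ p * s m + sigma1 m)).card : ℝ) := by
    intro p hp
    have hpp := hS p hp
    norm_cast
    refine Finset.card_le_card_of_injOn (fun n => n / p) ?_ ?_
    · intro n hn
      rw [Finset.mem_coe, Finset.mem_filter, hG, Finset.mem_filter, Finset.mem_Icc] at hn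
      obtain ⟨⟨⟨ha, hb⟩, hc, hds⟩, m, rfl⟩ := hn
      simp only [Nat.mul_div_cancel_left m hpp.pos]
      have hm : 0 < m := Nat.pos_of_ne_zero (by rintro rfl; simp at ha)
      have hpm : ¬ p ∣ m := by
        rintro ⟨t, rfl⟩
        apply hc
        simp only [Bad, Finset.mem_filter, Finset.mem_Icc]
        exact ⟨⟨ha, hb⟩, Or.inr ⟨p, hp, ⟨t, by ring⟩⟩⟩
      rw [Finset.mem_coe, Finset.mem_filter, Finset.mem_Icc]
      refine ⟨⟨hm, ?_⟩, ?_⟩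
      · rw [Nat.le_div_iff_mul_le hpp.pos, mul_comm]; exact hb
      · rw [← s_mul_prime p m hpp hm hpm]; exact hds
    · intro a ha b hb hab
      rw [Finset.mem_coe, Finset.mem_filter] at ha hb
      have := hab
      simp only at this
      rw [← Nat.div_mul_cancel ha.2, ← Nat.div_mul_cancel hb.2, this]
  rw [h2] at h1
  calc (G.card : ℝ) ≤ _ := h1
    _ ≤ ∑ p ∈ S, (((Icc 1 (N / p)).filter (fun m => d ∣ p * s m + sigma1 m)).card : ℝ) :=
        Finset.sum_le_sum h3
    _ ≤ ∑ p ∈ Ioc (2^A) (2^(A+n)),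
        (((Icc 1 (N / p)).filter (fun m => d ∣ p * s m + sigma1 m)).card : ℝ) :=
        Finset.sum_le_sum_of_subset_of_nonneg hsub fun _ _ _ => by positivity
    _ = ∑ k ∈ Ico A (A+n), ∑ p ∈ Ioc (2^k) (2^(k+1)),
        (((Icc 1 (N / p)).filter (fun m => d ∣ p * s m + sigma1 m)).card : ℝ) :=
        sum_Ioc_dyadic _ A n
    _ ≤ ∑ k ∈ Ico A (A+n), (2 * N * d.divisors.card / d : ℝ) := by
        refine Finset.sum_le_sum fun k hk => ?_
        have hk' := Finset.mem_Ico.1 hk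
        refine le_trans ?_ (pair_count d k N hd
          (hdA.trans (Nat.pow_le_pow_right (by norm_num) hk'.1)))
        have e : ∑ m ∈ Icc 1 (N / 2^k),
          (((Ioc (2^k) (2^(k+1))).filter (fun p => d ∣ p * s m + sigma1 m)).card : ℝ) =
          ∑ p ∈ Ioc (2^k) (2^(k+1)),
          (((Icc 1 (N / 2^k)).filter (fun m => d ∣ p * s m + sigma1 m)).card : ℝ) := by
          simp_rw [Finset.card_filter]
          push_cast
          exact Finset.sum_comm
        rw [e]
        refine Finset.sum_le_sum fun p hp => ?_
        have hp' := Finset.mem_Ioc.1 hp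
        norm_cast
        refine Finset.card_le_card (Finset.filter_subset_filter _ ?_)
        exact Finset.Icc_subset_Icc_right (Nat.div_le_div_left hp'.1.le (by positivity))
    _ = _ := by simp

open ArithmeticFunction.vonMangoldt in
lemma not_summable_ap (q : ℕ) [NeZero q] (a : ZMod q) (ha : IsUnit a) :
    ¬ Summable (fun n : ℕ => if n.Prime ∧ (n : ZMod q) = a then 1 / (n:ℝ) else 0) := by
  intro hf
  set f : ℕ → ℝ := fun n : ℕ => if n.Prime ∧ (n : ZMod q) = a then 1 / (n:ℝ) else 0 with hfdef
  have hf0 : ∀ n, 0 ≤ f n := by intro n; simp only [hfdef]; split_ifs <;> positivity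
  set h : ℕ → ℝ := fun n => (if n.Prime then 0 else residueClass a n) / n with hh
  have hhs : Summable h := summable_residueClass_non_primes_div a
  have hh0 : ∀ n, 0 ≤ h n := by
    intro n; simp only [hh]
    apply div_nonneg _ (Nat.cast_nonneg n)
    split_ifs
    · exact le_rfl
    · exact residueClass_nonneg a n
  obtain ⟨C, hC⟩ := LSeries_residueClass_lower_bound ha
  set φ : ℝ := (q.totient : ℝ)⁻¹ with hφ
  have hφ0 : 0 < φ := by
    rw [hφ]; exact inv_pos.2 (by exact_mod_cast Nat.totient_pos.2 (NeZero.pos q))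
  -- tail
  have htail := tendsto_tsum_compl_atTop_zero f
  obtain ⟨T, hT⟩ := ((tendsto_order.1 htail).2 (φ/2) (by positivity)).exists
  set fT : ℕ → ℝ := fun n => if n ∈ T then Real.log n * f n else 0 with hfT
  set fc : ℕ → ℝ := fun n => if n ∈ T then 0 else f n with hfc
  have hfTs : Summable fT := summable_of_ne_finset_zero (s := T) (by
    intro n hn; simp [hfT, hn])
  have hfcs : Summable fc := Summable.of_nonneg_of_le
    (by intro n; simp only [hfc]; split_ifs; exacts [le_rfl, hf0 n])
    (by intro n; simp only [hfc]; split_ifs; exacts [hf0 n, le_rfl]) hf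
  have hfcsum : ∑' n, fc n < φ / 2 := by
    have : ∑' n, fc n = ∑' n : {x // x ∉ T}, f n := by
      have e := tsum_subtype {n | n ∉ T} f
      have e2 : fc = Set.indicator {n | n ∉ T} f := by
        funext n
        by_cases hn : n ∈ T
        · simp only [hfc, hn, if_true]
          rw [Set.indicator_of_notMem]; exact fun hx => hx hn
        · simp only [hfc, hn, if_false]
          rw [Set.indicator_of_mem]; exact hn
      rw [e2, ← e]; rfl
    rw [this]; exact hT
  have key : ∀ x : ℝ, x ∈ Set.Ioc (1:ℝ) 2 →
      φ / (x - 1) - C ≤ ∑' n, h n + ∑' n, fT n + (∑' n, fc n) / (x - 1) := by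
    intro x hx
    have hx1 : 0 < x - 1 := by linarith [hx.1]
    refine (hC hx).trans ?_
    have hsum : Summable (fun n => h n + fT n + fc n / (x-1)) :=
      (hhs.add hfTs).add (hfcs.div_const _)
    have hle : ∀ n : ℕ, residueClass a n / (n:ℝ)^x ≤ h n + fT n + fc n / (x-1) := by
      intro n
      rcases Nat.eq_zero_or_pos n with rfl | hn
      · simp [hfT, hfc, hh, hfdef]
      have hnR : (1:ℝ) ≤ n := by exact_mod_cast hn
      have hn0 : (0:ℝ) < n := by linarith
      have hle1 : (n:ℝ) ≤ (n:ℝ)^x := by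
        conv_lhs => rw [← Real.rpow_one (n:ℝ)]
        exact Real.rpow_le_rpow_of_exponent_le hnR hx.1.le
      have hfT0 : 0 ≤ fT n := by
        simp only [hfT]; split_ifs
        · exact mul_nonneg (Real.log_nonneg hnR) (hf0 n)
        · exact le_rfl
      have hfc0 : 0 ≤ fc n / (x-1) := by
        apply div_nonneg _ hx1.le
        simp only [hfc]; split_ifs
        · exact le_rfl
        · exact hf0 n
      by_cases hp : n.Prime
      · by_cases hna : (n : ZMod q) = a
        · have hr : residueClass a n = Real.log n := by
            rw [residueClass, Set.indicator_of_mem (by exact hna),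
              ArithmeticFunction.vonMangoldt_apply_prime hp]
          have hfn : f n = 1 / n := by simp [hfdef, hp, hna]
          rw [hr]
          have hlog : 0 ≤ Real.log n := Real.log_nonneg hnR
          by_cases hnT : n ∈ T
          · have : fT n = Real.log n * (1 / n) := by simp only [hfT, hnT, if_true, hfn]
            have h1 : Real.log n / (n:ℝ)^x ≤ Real.log n * (1 / n) := by
              rw [mul_one_div]
              exact div_le_div_of_nonneg_left hlog hn0 hle1
            linarith [hh0 n]
          · have : fc n = 1 / n := by simp only [hfc, hnT, if_false, hfn]
            have h1 : Real.log n / (n:ℝ)^x ≤ fc n / (x-1) := by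
              rw [this]
              have h2 := Real.log_le_rpow_div hn0.le hx1
              have h3 : (n:ℝ)^x = (n:ℝ)^(x-1) * n := by
                rw [← Real.rpow_add_one hn0.ne']; congr 1; ring
              have h4 : 0 < (n:ℝ)^(x-1) := Real.rpow_pos_of_pos hn0 _
              rw [h3, div_le_iff₀ (by positivity)]
              refine h2.trans (le_of_eq ?_)
              field_simp
            linarith [hh0 n]
        · have hr : residueClass a n = 0 := by
            rw [residueClass, Set.indicator_of_notMem]; exact hna
          rw [hr, zero_div]; linarith [hh0 n]
      · have : h n = residueClass a n / n := by simp [hh, hp]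
        have h1 : residueClass a n / (n:ℝ)^x ≤ h n := by
          rw [this]
          exact div_le_div_of_nonneg_left (residueClass_nonneg a n) hn0 hle1
        linarith
    have hs2 : Summable (fun n : ℕ => residueClass a n / (n:ℝ)^x) :=
      Summable.of_nonneg_of_le
        (fun n => div_nonneg (residueClass_nonneg a n) (by positivity)) hle hsum
    refine (hs2.tsum_le_tsum hle hsum).trans (le_of_eq ?_)
    rw [(hhs.add hfTs).tsum_add (hfcs.div_const _), hhs.tsum_add hfTs, tsum_div_const]
  set B := ∑' n, h n + ∑' n, fT n + C with hB
  set c := φ - ∑' n, fc n with hc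
  have hc0 : 0 < c := by rw [hc]; linarith
  have key2 : ∀ δ : ℝ, 0 < δ → δ ≤ 1 → c ≤ B * δ := by
    intro δ h0 h1
    have := key (1 + δ) ⟨by linarith, by linarith⟩
    have e : 1 + δ - 1 = δ := by ring
    rw [e] at this
    have h2 : (φ - ∑' n, fc n) / δ ≤ B := by rw [sub_div, hB]; linarith
    rwa [div_le_iff₀ h0] at h2
  have hB0 : 0 < B := by have := key2 1 one_pos le_rfl; linarith
  have := key2 (min 1 (c / (2*B))) (by positivity) (min_le_left _ _)
  have h3 : B * min 1 (c / (2*B)) ≤ B * (c / (2*B)) := by gcongr; exact min_le_right _ _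
  have h4 : B * (c / (2*B)) = c / 2 := by field_simp
  linarith

lemma exists_prime_set (d y : ℕ) (hd : 0 < d) (M : ℝ) :
    ∃ z : ℕ, ∃ S : Finset ℕ, (∀ p ∈ S, p.Prime) ∧ (∀ p ∈ S, d ∣ p + 1) ∧ S ⊆ Ioc y z ∧
      M ≤ ∑ p ∈ S, (1 / (p:ℝ)) := by
  have : NeZero d := ⟨hd.ne'⟩
  have hns := not_summable_ap d (-1) (isUnit_one.neg)
  rw [not_summable_iff_tendsto_nat_atTop_of_nonneg
    (by intro n; split_ifs <;> positivity)] at hns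
  set f : ℕ → ℝ := fun n : ℕ => if n.Prime ∧ (n : ZMod d) = -1 then 1 / (n:ℝ) else 0 with hf
  have hf0 : ∀ n, 0 ≤ f n := by intro n; simp only [hf]; split_ifs <;> positivity
  obtain ⟨n, hn⟩ := (hns.eventually_ge_atTop (M + ∑ i ∈ range (y+1), f i)).exists
  refine ⟨n, (Ioc y n).filter (fun p => p.Prime ∧ (p : ZMod d) = -1), ?_, ?_, ?_, ?_⟩
  · intro p hp; exact (Finset.mem_filter.1 hp).2.1
  · intro p hp
    have := (Finset.mem_filter.1 hp).2.2
    rw [← ZMod.natCast_eq_zero_iff]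
    push_cast
    rw [this]; ring
  · exact Finset.filter_subset _ _
  · rw [Finset.sum_filter]
    change M ≤ ∑ p ∈ Ioc y n, f p
    have hsub : range n ⊆ range (y+1) ∪ Ioc y n := by
      intro i hi
      simp only [Finset.mem_union, Finset.mem_range, Finset.mem_Ioc] at hi ⊢
      omega
    have h1 : ∑ i ∈ range n, f i ≤ ∑ i ∈ range (y+1) ∪ Ioc y n, f i :=
      Finset.sum_le_sum_of_subset_of_nonneg hsub fun i _ _ => hf0 i
    have hdis : Disjoint (range (y+1)) (Ioc y n) := by
      rw [Finset.disjoint_left]; intro i; simp only [Finset.mem_range, Finset.mem_Ioc]; omega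
    rw [Finset.sum_union hdis] at h1
    linarith

lemma fixed_d (d : ℕ) (hd : 0 < d) : ∃ X : ℕ, ∀ N : ℕ, X ≤ N →
    (((Icc 1 N).filter (fun n => d ∣ s n)).card : ℝ) ≤ 2 * N / d := by
  have hdR : (0:ℝ) < d := by exact_mod_cast hd
  obtain ⟨z, S, hS, hSd, hsub, hM⟩ := exists_prime_set d (2*d) hd (24 * d)
  refine ⟨S.card, fun N hN => ?_⟩
  set L := ∑ p ∈ S, (1 / (p:ℝ)) with hL
  have hL0 : 0 < L := by linarith
  have hbad := bad_card S hS (2*d) z (by omega) hsub N hN L hL hL0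
  have hss : (Icc 1 N).filter (fun n => d ∣ s n) ⊆
      Bad S L N ∪ (Icc 1 N).filter (fun n => d ∣ n) := by
    intro n hn
    rw [Finset.mem_filter] at hn
    rw [Finset.mem_union, or_iff_not_imp_left]
    intro hnb
    simp only [Bad, Finset.mem_filter, not_and, not_or, not_lt, not_exists] at hnb
    obtain ⟨h1, h2⟩ := hnb hn.1
    have hom : (0:ℝ) < om S n := by linarith
    have hom' : 0 < om S n := by exact_mod_cast hom
    obtain ⟨p, hp⟩ := Finset.card_pos.1 hom'
    rw [Finset.mem_filter] at hp
    obtain ⟨hpS, m, rfl⟩ := hp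
    have hpm : ¬ p ∣ m := by
      rintro ⟨t, rfl⟩
      exact h2 p hpS ⟨t, by ring⟩
    have hds : d ∣ sigma1 (p * m) := by
      rw [sigma1_mul_prime p m (hS p hpS) hpm]
      exact (hSd p hpS).mul_right _
    have hpos : 0 < p * m := (Finset.mem_Icc.1 hn.1).1
    have hge := sigma1_ge (p*m) hpos
    rw [Finset.mem_filter]
    refine ⟨hn.1, ?_⟩
    have e : sigma1 (p*m) = s (p*m) + p * m := by unfold s; omega
    rw [e] at hds
    exact (Nat.dvd_add_right hn.2).1 hds
  have h3 := (Nat.cast_le (α := ℝ)).2 ((Finset.card_le_card hss).trans (Finset.card_union_le _ _))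
  rw [Nat.cast_add] at h3
  have h4 := card_mult_le N d
  have h5 : 12 * (N:ℝ) / L ≤ 12 * N / (24 * d) := by gcongr
  have h6 : 12 * (N:ℝ) / (24 * d) = N / d / 2 := by field_simp; ring
  have h7 : (N:ℝ) / ((2 * d : ℕ) : ℝ) = N / d / 2 := by push_cast; field_simp
  have h8 : 2 * (N:ℝ) / d = N / d + N / d := by ring
  rw [h7] at hbad
  linarith

lemma theta_block (r : ℕ) (hr : 22 ≤ r) :
    (2:ℝ)^r * Real.log 2 ≤ Chebyshev.theta ((2^(r+2) : ℕ) : ℝ) - Chebyshev.theta ((2^r : ℕ) : ℝ) := by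
  have h1 := Chebyshev.theta_ge (2^(r+2))
  have h2 := Chebyshev.theta_le_log4_mul_x (x := ((2^r : ℕ) : ℝ)) (by positivity)
  have hl4 : Real.log 4 = 2 * Real.log 2 := by
    rw [show (4:ℝ) = 2^2 by norm_num, Real.log_pow]; norm_num
  rw [hl4] at h2
  set t : ℝ := ((2^(r+2) : ℕ) : ℝ) with ht
  have htX : t = 4 * (2:ℝ)^r := by rw [ht]; push_cast; ring
  have htb : (60:ℝ)^4 ≤ t := by
    have : (2:ℝ)^22 ≤ 2^r := pow_le_pow_right₀ (by norm_num) hr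
    rw [htX]; norm_num at this ⊢; linarith
  set v := √(√t) with hv
  have ht0 : 0 < t := by linarith [show (0:ℝ) < 60^4 by norm_num]
  have hv2 : √t = v^2 := (Real.sq_sqrt (Real.sqrt_nonneg t)).symm
  have hv4 : t = v^4 := by
    rw [show v^4 = (v^2)^2 by ring, ← hv2, Real.sq_sqrt ht0.le]
  have hv60 : 60 ≤ v := by
    have hv0 : 0 ≤ v := Real.sqrt_nonneg _
    rw [hv4] at htb
    exact le_of_pow_le_pow_left₀ (by norm_num) hv0 htb
  have hlogt : Real.log t ≤ 4 * v := by
    rw [hv4, Real.log_pow]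
    have := Real.log_le_self (show 0 ≤ v by linarith)
    push_cast; linarith
  have hlogt1 : Real.log (t+1) ≤ 4 * v + 1 := by
    have h3 : Real.log (t+1) ≤ Real.log t + 1 := by
      have : t + 1 ≤ t * Real.exp 1 := by
        have := Real.add_one_le_exp (1:ℝ)
        nlinarith
      calc _ ≤ Real.log (t * Real.exp 1) := Real.log_le_log (by linarith) this
        _ = _ := by rw [Real.log_mul ht0.ne' (Real.exp_pos 1).ne', Real.log_exp]
    linarith
  have hl2 := Real.log_two_gt_d9
  have hsq : 2 * √t * Real.log t ≤ 8 * v^3 := by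
    rw [hv2]
    nlinarith [sq_nonneg v]
  have hXt : (2:ℝ)^r = t / 4 := by rw [htX]; ring
  push_cast at h2 
  rw [hXt] at h2 ⊢
  have hfin : 4 * v + 1 + 8 * v^3 ≤ t / 4 * Real.log 2 := by
    have h5 : t / 4 * 0.68 ≤ t / 4 * Real.log 2 := by
      apply mul_le_mul_of_nonneg_left _ (by positivity); linarith
    have h6 : 4 * v + 1 + 8 * v^3 ≤ t / 4 * 0.68 := by
      rw [hv4]
      have : 60 * v^3 ≤ v^4 := by
        have : 0 ≤ v^3 * (v - 60) := mul_nonneg (by positivity) (by linarith)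
        nlinarith
      have h7 : 60 * 60 * v ≤ v^3 := by nlinarith [mul_nonneg (show 0 ≤ v by linarith) (show 0 ≤ v^2 - 60*60 by nlinarith)]
      linarith
    linarith
  push_cast
  rw [hXt]
  linarith

/-- primes in a dyadic window -/
def Wp (A B : ℕ) : Finset ℕ := (Ioc (2^A) (2^B)).filter Nat.Prime

/-- sum of reciprocals over the window -/
noncomputable def Rp (A B : ℕ) : ℝ := ∑ p ∈ Wp A B, (1 / (p:ℝ))

lemma Rp_add (A B C : ℕ) (h1 : A ≤ B) (h2 : B ≤ C) : Rp A C = Rp A B + Rp B C := by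
  simp only [Rp, Wp, Finset.sum_filter]
  rw [Finset.sum_Ioc_consecutive _ (Nat.pow_le_pow_right (by norm_num) h1)
        (Nat.pow_le_pow_right (by norm_num) h2)]

lemma Rp_block (r : ℕ) (hr : 22 ≤ r) : 1 / (4 * ((r:ℝ) + 2)) ≤ Rp r (r+2) := by
  have h := theta_block r hr
  have e : Chebyshev.theta ((2^(r+2) : ℕ) : ℝ) - Chebyshev.theta ((2^r : ℕ) : ℝ) =
      ∑ p ∈ Wp r (r+2), Real.log p := by
    simp only [Chebyshev.theta, Nat.floor_natCast, Wp, Finset.sum_filter]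
    rw [← Finset.sum_Ioc_consecutive _ (Nat.zero_le (2^r))
      (Nat.pow_le_pow_right (by norm_num) (by omega : r ≤ r+2))]
    ring
  rw [e] at h
  have hl2 : 0 < Real.log 2 := Real.log_pos (by norm_num)
  have h2 : ∑ p ∈ Wp r (r+2), Real.log p ≤
      ∑ p ∈ Wp r (r+2), (1 / (p:ℝ)) * ((2:ℝ)^(r+2) * ((r+2) * Real.log 2)) := by
    refine Finset.sum_le_sum fun p hp => ?_
    simp only [Wp, Finset.mem_filter, Finset.mem_Ioc] at hp
    have hp0 : (0:ℝ) < p := by exact_mod_cast hp.2.pos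
    have hple : (p:ℝ) ≤ 2^(r+2) := by exact_mod_cast hp.1.2
    have hlog : Real.log p ≤ (r+2) * Real.log 2 := by
      have := Real.log_le_log hp0 hple
      rw [Real.log_pow] at this
      push_cast at this; exact this
    have h3 : 1 ≤ (1 / (p:ℝ)) * 2^(r+2) := by
      rw [one_div, inv_mul_eq_div, le_div_iff₀ hp0]; linarith
    have h4 : 0 ≤ (r+2) * Real.log 2 := by positivity
    rw [← mul_assoc]
    nlinarith
  rw [← Finset.sum_mul] at h2
  change _ ≤ Rp r (r+2) * _ at h2
  have h3 := h.trans h2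
  have hX : (0:ℝ) < 2^r := by positivity
  have h4 : (2:ℝ)^r * Real.log 2 * 1 ≤ (2:ℝ)^r * Real.log 2 * (Rp r (r+2) * (4 * (r+2))) := by
    calc (2:ℝ)^r * Real.log 2 * 1 = (2:ℝ)^r * Real.log 2 := mul_one _
      _ ≤ Rp r (r+2) * ((2:ℝ)^(r+2) * ((r+2) * Real.log 2)) := h3
      _ = _ := by ring
  have h5 := le_of_mul_le_mul_left h4 (by positivity)
  rw [div_le_iff₀ (by positivity)]; exact h5

lemma Rp_double (m : ℕ) (hm : 22 ≤ m) (i : ℕ) (hi : 2 * i ≤ m) :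
    (i:ℝ) / (8 * m) ≤ Rp m (m + 2 * i) := by
  induction i with
  | zero => simp [Rp, Wp]
  | succ i ih =>
    have h1 := ih (by omega)
    have h2 := Rp_block (m + 2 * i) (by omega)
    rw [Rp_add m (m+2*i) (m + 2*(i+1)) (by omega) (by omega)]
    have hm0 : (0:ℝ) < m := by exact_mod_cast (by omega : 0 < m)
    have h3 : 1 / (8 * (m:ℝ)) ≤ 1 / (4 * (((m + 2 * i : ℕ):ℝ) + 2)) := by
      apply one_div_le_one_div_of_le (by positivity)
      have : ((m + 2*i : ℕ):ℝ) + 2 ≤ 2 * m := by exact_mod_cast (by omega : m + 2*i + 2 ≤ 2*m)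
      linarith
    have e : m + 2 * (i+1) = m + 2*i + 2 := by ring
    rw [e]
    push_cast
    rw [add_div]
    push_cast at h3 h2
    linarith

lemma Rp_window (a K : ℕ) (ha : 5 ≤ a) : (K:ℝ) / 16 ≤ Rp (2^a) (2^(a+K)) := by
  induction K with
  | zero => simp [Rp, Wp]
  | succ K ih =>
    rw [Rp_add (2^a) (2^(a+K)) (2^(a+(K+1))) (Nat.pow_le_pow_right (by norm_num) (by omega))
      (Nat.pow_le_pow_right (by norm_num) (by omega))]
    have hb : 32 ≤ 2^(a+K) := by
      calc 32 = 2^5 := by norm_num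
        _ ≤ _ := Nat.pow_le_pow_right (by norm_num) (by omega)
    have h2 : 2 * 2^(a+K-1) = 2^(a+K) := by
      rw [← pow_succ']; congr 1; omega
    have h1 := Rp_double (2^(a+K)) (by omega) (2^(a+K-1)) (by omega)
    have e : 2^(a+K) + 2 * 2^(a+K-1) = 2^(a+(K+1)) := by rw [h2]; ring
    rw [e] at h1
    have h3 : ((2^(a+K-1) : ℕ):ℝ) / (8 * ((2^(a+K):ℕ):ℝ)) = 1/16 := by
      rw [← h2]; push_cast; field_simp; norm_num
    rw [h3] at h1
    push_cast
    linarith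

/-- bad set for the double exponential window -/
noncomputable def Bd (a K N : ℕ) : Finset ℕ := Bad (Wp (2^a) (2^(a+K))) (Rp (2^a) (2^(a+K))) N

lemma Bd_subset (a K N : ℕ) : Bd a K N ⊆ Icc 1 N := Finset.filter_subset _ _

lemma Bd_card (a K N : ℕ) (ha : 5 ≤ a) (hK : 1 ≤ K) (hN : 2^(2^(a+K)) ≤ N) :
    ((Bd a K N).card : ℝ) ≤ 192 * N / K + N / 2^a := by
  have hK0 : (0:ℝ) < K := by exact_mod_cast hK
  have hR := Rp_window a K ha
  have hR0 : 0 < Rp (2^a) (2^(a+K)) := by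
    have : 0 < (K:ℝ)/16 := by positivity
    linarith
  have hcard : (Wp (2^a) (2^(a+K))).card ≤ N := by
    refine (Finset.card_filter_le _ _).trans ?_
    rw [Nat.card_Ioc]; exact (Nat.sub_le _ _).trans hN
  have h := bad_card (Wp (2^a) (2^(a+K))) (fun p hp => (Finset.mem_filter.1 hp).2)
    (2^(2^a)) (2^(2^(a+K))) (by positivity) (Finset.filter_subset _ _) N hcard
    (Rp (2^a) (2^(a+K))) rfl hR0
  refine h.trans (add_le_add ?_ ?_)
  · calc 12 * (N:ℝ) / Rp (2^a) (2^(a+K)) ≤ 12 * N / (K/16) := by gcongr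
      _ = _ := by field_simp; ring
  · have : (2:ℝ)^a ≤ ((2^(2^a) : ℕ):ℝ) := by
      exact_mod_cast Nat.pow_le_pow_right (by norm_num) Nat.lt_two_pow_self.le
    gcongr

lemma Bd_count (a K N d : ℕ) (ha : 5 ≤ a) (hK : 32 ≤ K) (hd : 0 < d) (hda : d ≤ 2^(2^a)) :
    (((Icc 1 N).filter (fun n => n ∉ Bd a K N ∧ d ∣ s n)).card : ℝ) ≤
      2^(a+K) * (2 * N * d.divisors.card / d) := by
  have hR := Rp_window a K ha
  have hK' : (32:ℝ) ≤ K := by exact_mod_cast hK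
  have hle : 2^a ≤ 2^(a+K) := Nat.pow_le_pow_right (by norm_num) (by omega)
  have h := window_count (Wp (2^a) (2^(a+K))) (fun p hp => (Finset.mem_filter.1 hp).2)
    (2^a) (2^(a+K) - 2^a) (by
      rw [Nat.add_sub_cancel' hle]; exact Finset.filter_subset _ _)
    (Rp (2^a) (2^(a+K))) (by linarith) N d hd hda
  refine h.trans ?_
  gcongr
  exact_mod_cast Nat.sub_le _ _

lemma divisor_bound : ∃ C : ℝ, 0 < C ∧ ∀ d : ℕ, 0 < d →
    (d.divisors.card : ℝ) ≤ C * (d:ℝ) ^ (1/16 : ℝ) := by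
  obtain ⟨M, hM⟩ : ∃ M : ℕ, M = 2^16 := ⟨_, rfl⟩
  refine ⟨24^M, by positivity, fun d hd => ?_⟩
  have e1 : (d.divisors.card : ℝ) = ∏ p ∈ d.primeFactors, ((d.factorization p : ℝ) + 1) := by
    rw [Nat.card_divisors hd.ne']; push_cast; rfl
  have e2 : (d:ℝ) ^ (1/16 : ℝ) = ∏ p ∈ d.primeFactors, ((p:ℝ) ^ (1/16:ℝ)) ^ (d.factorization p) := by
    conv_lhs => rw [← Nat.prod_factorization_pow_eq_self hd.ne']
    rw [Nat.prod_factorization_eq_prod_primeFactors]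
    push_cast
    rw [← Real.finsetProd_rpow _ _ (fun i _ => by positivity)]
    refine Finset.prod_congr rfl fun p _ => ?_
    rw [← Real.rpow_natCast, ← Real.rpow_natCast, ← Real.rpow_mul (by positivity),
      ← Real.rpow_mul (by positivity), mul_comm]
  have h1 : ∀ p ∈ d.primeFactors, ((d.factorization p : ℝ) + 1) ≤
      (if p < M then (24:ℝ) else 1) * ((p:ℝ) ^ (1/16:ℝ)) ^ (d.factorization p) := by
    intro p hp
    have hpp := Nat.prime_of_mem_primeFactors hp
    set e := d.factorization p
    by_cases hpM : p < M
    · rw [if_pos hpM]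
      have h2 : (2:ℝ)^(1/16:ℝ) ≤ (p:ℝ)^(1/16:ℝ) :=
        Real.rpow_le_rpow (by norm_num) (by exact_mod_cast hpp.two_le) (by norm_num)
      have h3 : ((2:ℝ)^(1/16:ℝ))^e ≤ ((p:ℝ)^(1/16:ℝ))^e := by gcongr
      have h4 : ((2:ℝ)^(1/16:ℝ))^e = Real.exp (Real.log 2 * (1/16) * e) := by
        rw [Real.rpow_def_of_pos (by norm_num), ← Real.exp_nat_mul]; congr 1; ring
      have h5 := Real.add_one_le_exp (Real.log 2 * (1/16) * e)
      rw [← h4] at h5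
      have h6 : 0.68 * (1/16) * (e:ℝ) ≤ Real.log 2 * (1/16) * e := by
        have := Real.log_two_gt_d9
        gcongr; linarith
      have he : (0:ℝ) ≤ e := Nat.cast_nonneg e
      linarith
    · rw [if_neg hpM, one_mul]
      have h2 : (2:ℝ) ≤ (p:ℝ)^(1/16:ℝ) := by
        have h7 : ((2:ℝ)^(16:ℕ))^(1/16:ℝ) = 2 := by
          rw [← Real.rpow_natCast, ← Real.rpow_mul (by norm_num)]; norm_num
        calc (2:ℝ) = ((2:ℝ)^(16:ℕ))^(1/16:ℝ) := h7.symm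
          _ ≤ _ := by
            apply Real.rpow_le_rpow (by positivity) _ (by norm_num)
            have : 2^16 ≤ p := by omega
            exact_mod_cast this
      calc (e:ℝ) + 1 ≤ 2^e := by exact_mod_cast Nat.lt_two_pow_self
        _ ≤ _ := by gcongr
  rw [e1]
  calc _ ≤ ∏ p ∈ d.primeFactors,
        (if p < M then (24:ℝ) else 1) * ((p:ℝ) ^ (1/16:ℝ)) ^ (d.factorization p) :=
        Finset.prod_le_prod (fun _ _ => by positivity) h1
    _ = (∏ p ∈ d.primeFactors, (if p < M then (24:ℝ) else 1)) * (d:ℝ) ^ (1/16 : ℝ) := by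
        rw [Finset.prod_mul_distrib, e2]
    _ ≤ _ := by
        gcongr
        rw [← Finset.prod_filter, Finset.prod_const]
        apply pow_le_pow_right₀ (by norm_num)
        calc _ ≤ (range M).card := Finset.card_le_card (by
              intro p hp; rw [Finset.mem_filter] at hp; exact Finset.mem_range.2 hp.2)
          _ = M := Finset.card_range M

lemma final_arith (C : ℝ) (hC : 0 < C) (d : ℕ) (hd : 0 < d)
    (hτ : (d.divisors.card : ℝ) ≤ C * (d:ℝ) ^ (1/16 : ℝ)) (M : ℕ) (hM : M^32 ≤ d)
    (b x : ℝ) (N : ℕ) (hb : b ≤ M) (hN : (N:ℝ) ≤ x) :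
    b * (2 * N * d.divisors.card / d) ≤ (2 * C + 2) * x / (d:ℝ)^(0.9:ℝ) := by
  have hd0 : (0:ℝ) < d := by exact_mod_cast hd
  have hd1 : (1:ℝ) ≤ d := by exact_mod_cast hd
  have hx0 : 0 ≤ x := (Nat.cast_nonneg N).trans hN
  have hMd : (M:ℝ) ≤ (d:ℝ)^(1/32:ℝ) := by
    have h1 : ((M:ℝ)^(32:ℕ))^(1/32:ℝ) = M := by
      rw [← Real.rpow_natCast, ← Real.rpow_mul (by positivity)]; norm_num
    rw [← h1]
    apply Real.rpow_le_rpow (by positivity) _ (by norm_num)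
    exact_mod_cast hM
  have h2 : b * (2 * N * d.divisors.card / d) ≤
      (d:ℝ)^(1/32:ℝ) * (2 * x * (C * (d:ℝ) ^ (1/16 : ℝ)) / d) := by
    have := hb.trans hMd
    gcongr
  have h3 : (d:ℝ)^(1/32:ℝ) * (2 * x * (C * (d:ℝ) ^ (1/16 : ℝ)) / d) =
      2 * C * x * ((d:ℝ)^(1/32:ℝ) * (d:ℝ)^(1/16:ℝ) * (d:ℝ)^(-1:ℝ)) := by
    rw [Real.rpow_neg_one]; ring
  have h4 : (d:ℝ)^(1/32:ℝ) * (d:ℝ)^(1/16:ℝ) * (d:ℝ)^(-1:ℝ) ≤ (d:ℝ)^(-0.9:ℝ) := by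
    rw [← Real.rpow_add hd0, ← Real.rpow_add hd0]
    exact Real.rpow_le_rpow_of_exponent_le hd1 (by norm_num)
  have h5 : (d:ℝ)^(-0.9:ℝ) = ((d:ℝ)^(0.9:ℝ))⁻¹ := Real.rpow_neg hd0.le _
  rw [h5] at h4
  have h6 : 0 < ((d:ℝ)^(0.9:ℝ))⁻¹ := inv_pos.2 (Real.rpow_pos_of_pos hd0 _)
  rw [h3] at h2
  rw [div_eq_mul_inv]
  calc _ ≤ _ := h2
    _ ≤ 2 * C * x * ((d:ℝ)^(0.9:ℝ))⁻¹ := by gcongr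
    _ ≤ (2 * C + 2) * x * ((d:ℝ)^(0.9:ℝ))⁻¹ := by
        apply mul_le_mul_of_nonneg_right _ h6.le
        nlinarith

lemma small_d (Q : ℕ) : ∃ X : ℕ, ∀ d < Q, 0 < d → ∀ N, X ≤ N →
    (((Icc 1 N).filter (fun n => d ∣ s n)).card : ℝ) ≤ 2 * N / d := by
  induction Q with
  | zero => exact ⟨0, fun d hd => absurd hd (Nat.not_lt_zero d)⟩
  | succ Q ih =>
    obtain ⟨X, hX⟩ := ih
    rcases Nat.eq_zero_or_pos Q with h | h
    · subst h; exact ⟨0, fun d hd h0 => by omega⟩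
    · obtain ⟨Y, hY⟩ := fixed_d Q h
      refine ⟨max X Y, fun d hd h0 N hN => ?_⟩
      rcases Nat.lt_succ_iff_lt_or_eq.1 hd with h1 | rfl
      · exact hX d h1 h0 N ((le_max_left _ _).trans hN)
      · exact hY N ((le_max_right _ _).trans hN)

/-- union of the bad sets over all scales from `I` on -/
noncomputable def E1 (I N : ℕ) : Finset ℕ :=
  (Icc 1 N).filter (fun n => ∃ i, I ≤ i ∧ 2^(2^(2^i)) ≤ N ∧ n ∈ Bd (i+6) (2^i - i - 6) N)

lemma pow_aux (i : ℕ) (hi : 6 ≤ i) : i + 6 + 2^(i-1) ≤ 2^i := by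
  obtain ⟨t, rfl⟩ := Nat.exists_eq_add_of_le hi
  induction t with
  | zero => norm_num
  | succ t ih =>
    have h := ih (by omega)
    have e1 : 6 + (t+1) - 1 = 6 + t - 1 + 1 := by omega
    have e2 : 6 + (t+1) = 6 + t + 1 := by omega
    rw [e1, e2, pow_succ, pow_succ]
    omega

lemma E1_card (I N : ℕ) (hI : 6 ≤ I) : ((E1 I N).card : ℝ) ≤ 770 * N / 2^I := by
  have hsub : E1 I N ⊆ ((Ico I N).filter (fun i => 2^(2^(2^i)) ≤ N)).biUnion
      (fun i => Bd (i+6) (2^i - i - 6) N) := by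
    intro n hn
    simp only [E1, Finset.mem_filter] at hn
    obtain ⟨_, i, h1, h2, h3⟩ := hn
    rw [Finset.mem_biUnion]
    refine ⟨i, ?_, h3⟩
    rw [Finset.mem_filter, Finset.mem_Ico]
    refine ⟨⟨h1, ?_⟩, h2⟩
    calc i < 2^i := Nat.lt_two_pow_self
      _ < 2^(2^i) := Nat.lt_two_pow_self
      _ < 2^(2^(2^i)) := Nat.lt_two_pow_self
      _ ≤ N := h2
  have h1 := (Nat.cast_le (α := ℝ)).2 ((Finset.card_le_card hsub).trans Finset.card_biUnion_le)
  rw [Nat.cast_sum] at h1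
  have h2 : ∀ i ∈ (Ico I N).filter (fun i => 2^(2^(2^i)) ≤ N),
      ((Bd (i+6) (2^i - i - 6) N).card : ℝ) ≤ 385 * N * (1/2)^i := by
    intro i hi
    rw [Finset.mem_filter, Finset.mem_Ico] at hi
    have hi6 : 6 ≤ i := hI.trans hi.1.1
    have hp := pow_aux i hi6
    have hpos : 0 < 2^(i-1) := by positivity
    have e : i + 6 + (2^i - i - 6) = 2^i := by omega
    have hK : 2^(i-1) ≤ 2^i - i - 6 := by omega
    have h := Bd_card (i+6) (2^i - i - 6) N (by omega) (by omega) (by rw [e]; exact hi.2)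
    refine h.trans ?_
    have hKR : (2:ℝ)^i / 2 ≤ ((2^i - i - 6 : ℕ) : ℝ) := by
      have h3 : ((2^(i-1) : ℕ):ℝ) ≤ ((2^i - i - 6 : ℕ) : ℝ) := by exact_mod_cast hK
      have h4 : (2:ℝ)^i / 2 = ((2^(i-1) : ℕ):ℝ) := by
        push_cast
        obtain ⟨t, rfl⟩ : ∃ t, i = t + 1 := ⟨i-1, by omega⟩
        rw [Nat.add_sub_cancel, pow_succ]; ring
      linarith
    have h5 : 192 * (N:ℝ) / ((2^i - i - 6 : ℕ) : ℝ) ≤ 192 * N / ((2:ℝ)^i / 2) := by gcongr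
    have h6 : (N:ℝ) / 2^(i+6) ≤ N / 2^i := by
      gcongr
      · norm_num
      · omega
    have h7 : 192 * (N:ℝ) / ((2:ℝ)^i / 2) + N / 2^i = 385 * N * (1/2)^i := by
      rw [one_div, inv_pow]; field_simp; ring
    linarith
  refine h1.trans ((Finset.sum_le_sum h2).trans ?_)
  calc _ ≤ ∑ i ∈ Ico I N, 385 * (N:ℝ) * (1/2)^i :=
        Finset.sum_le_sum_of_subset_of_nonneg (Finset.filter_subset _ _)
          fun _ _ _ => by positivity
    _ = 385 * N * ∑ i ∈ Ico I N, (1/2:ℝ)^i := by rw [Finset.mul_sum]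
    _ ≤ 385 * N * ((1/2)^I / (1 - 1/2)) := by
        gcongr
        exact geom_sum_Ico_le_of_lt_one (by norm_num) (by norm_num)
    _ = _ := by rw [one_div, inv_pow]; field_simp; ring

lemma main_eps : ∃ C : ℝ, 0 < C ∧ ∀ ε : ℝ, 0 < ε → ∀ᶠ x : ℝ in atTop,
    ∃ E : Finset ℕ, E ⊆ Icc 1 ⌊x⌋₊ ∧ (E.card : ℝ) ≤ ε * x ∧
      ∀ d : ℕ, 0 < d →
        (d : ℝ) ≤ x ^ (1 / (2 * Real.log (Real.log (Real.log x)))) →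
        (((Finset.Icc 1 ⌊x⌋₊).filter (fun n => n ∉ E ∧ d ∣ s n)).card : ℝ)
          ≤ C * x / (d : ℝ) ^ (0.9 : ℝ) := by
  obtain ⟨C, hC, hτ⟩ := divisor_bound
  refine ⟨2 * C + 2, by positivity, fun ε hε => ?_⟩
  -- parameters
  obtain ⟨I0, hI0⟩ := pow_unbounded_of_one_lt (1540 / ε) (one_lt_two (α := ℝ))
  obtain ⟨I, hI⟩ : ∃ I, I = I0 + 6 := ⟨_, rfl⟩
  have hIε : 770 / (2:ℝ)^I ≤ ε / 2 := by
    have h1 : (2:ℝ)^I0 ≤ 2^I := pow_le_pow_right₀ (by norm_num) (by omega)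
    rw [div_lt_iff₀ hε] at hI0
    rw [div_le_iff₀ (by positivity)]
    nlinarith
  obtain ⟨K0, hK0⟩ := exists_nat_gt (768 / ε)
  obtain ⟨K, hK⟩ : ∃ K, K = K0 + 32 := ⟨_, rfl⟩
  have hKε : 192 / (K:ℝ) ≤ ε / 4 := by
    have h1 : (K0:ℝ) ≤ K := by exact_mod_cast (by omega : K0 ≤ K)
    have h2 : (0:ℝ) < K := by exact_mod_cast (by omega : 0 < K)
    rw [div_lt_iff₀ hε] at hK0
    rw [div_le_iff₀ h2]
    nlinarith
  obtain ⟨a1, ha1⟩ := pow_unbounded_of_one_lt (4 / ε) (one_lt_two (α := ℝ))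
  obtain ⟨X0, hX0⟩ := small_d (2^(2^(I+5)))
  have hlim : Tendsto (fun x => Real.log (Real.log (Real.log x))) atTop atTop :=
    Real.tendsto_log_atTop.comp (Real.tendsto_log_atTop.comp Real.tendsto_log_atTop)
  obtain ⟨Z, hZ⟩ : ∃ Z : ℕ, Z = 2^(2^(K+5+a1)) := ⟨_, rfl⟩
  filter_upwards [hlim.eventually_ge_atTop ((2:ℝ)^K), eventually_ge_atTop (1:ℝ),
    eventually_ge_atTop (X0:ℝ), eventually_ge_atTop (Z:ℝ)] with x hℓ hx1 hxX hxZ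
  set ℓ := Real.log (Real.log (Real.log x)) with hℓdef
  set N := ⌊x⌋₊ with hNdef
  have hNx : (N:ℝ) ≤ x := Nat.floor_le (by linarith)
  have hxN : x < N + 1 := Nat.lt_floor_add_one x
  have hNX : X0 ≤ N := Nat.le_floor hxX
  have hNZ : 2^(2^(K+5+a1)) ≤ N := hZ ▸ Nat.le_floor hxZ
  obtain ⟨l, hl⟩ : ∃ l, l = Nat.log 2 N := ⟨_, rfl⟩
  obtain ⟨t, ht⟩ : ∃ t, t = Nat.log 2 l := ⟨_, rfl⟩
  have hN0 : N ≠ 0 := by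
    have : 0 < 2^(2^(K+5+a1)) := by positivity
    omega
  have hl1 : 2^l ≤ N := hl ▸ Nat.pow_log_le_self 2 hN0
  have hl2 : N < 2^(l+1) := hl ▸ Nat.lt_pow_succ_log_self (by norm_num) N
  have hlge : 2^(K+5+a1) ≤ l := hl ▸ Nat.le_log_of_pow_le (by norm_num) hNZ
  have hl0 : l ≠ 0 := by
    have : 0 < 2^(K+5+a1) := by positivity
    omega
  have ht1 : 2^t ≤ l := ht ▸ Nat.pow_log_le_self 2 hl0
  have ht2 : l < 2^(t+1) := ht ▸ Nat.lt_pow_succ_log_self (by norm_num) l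
  have htge : K+5+a1 ≤ t := ht ▸ Nat.le_log_of_pow_le (by norm_num) hlge
  obtain ⟨a, ha⟩ : ∃ a, t = a + K := ⟨t - K, by omega⟩
  have hNt : 2^(2^(a+K)) ≤ N := by
    rw [← ha]; exact (Nat.pow_le_pow_right (by norm_num) ht1).trans hl1
  refine ⟨E1 I N ∪ Bd a K N, Finset.union_subset (Finset.filter_subset _ _) (Bd_subset _ _ _),
    ?_, ?_⟩
  · have h1 := (Nat.cast_le (α := ℝ)).2 (Finset.card_union_le (E1 I N) (Bd a K N))
    rw [Nat.cast_add] at h1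
    have h2 := E1_card I N (by omega)
    have h3 := Bd_card a K N (by omega) (by omega) hNt
    have hN00 : (0:ℝ) ≤ N := Nat.cast_nonneg N
    have h4 : 770 * (N:ℝ) / 2^I = N * (770 / 2^I) := by ring
    have h5 : 192 * (N:ℝ) / K = N * (192 / K) := by ring
    have h6 : (N:ℝ) / 2^a = N * (1 / 2^a) := by ring
    have h7 : 1 / (2:ℝ)^a ≤ ε / 4 := by
      have h8 : (2:ℝ)^a1 ≤ 2^a := pow_le_pow_right₀ (by norm_num) (by omega)
      rw [div_lt_iff₀ hε] at ha1
      rw [div_le_iff₀ (by positivity)]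
      nlinarith
    rw [h4] at h2
    rw [h5, h6] at h3
    have h9 := mul_le_mul_of_nonneg_left hIε hN00
    have h10 := mul_le_mul_of_nonneg_left hKε hN00
    have h11 := mul_le_mul_of_nonneg_left h7 hN00
    have h12 := mul_le_mul_of_nonneg_left hNx hε.le
    linarith
  · intro d hd hdx
    have hd0 : (0:ℝ) < d := by exact_mod_cast hd
    have hd1 : (1:ℝ) ≤ d := by exact_mod_cast hd
    rcases lt_or_ge d (2^(2^(I+5))) with hsmall | hlarge
    · have h1 := hX0 d hsmall hd N hNX
      have h2 : (((Icc 1 N).filter (fun n => n ∉ E1 I N ∪ Bd a K N ∧ d ∣ s n)).card : ℝ) ≤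
          (((Icc 1 N).filter (fun n => d ∣ s n)).card : ℝ) := by
        refine Nat.cast_le.2 (Finset.card_le_card fun n hn => ?_)
        rw [Finset.mem_filter] at hn ⊢
        exact ⟨hn.1, hn.2.2⟩
      refine h2.trans (h1.trans ?_)
      have h3 : (d:ℝ)^(0.9:ℝ) ≤ d := by
        conv_rhs => rw [← Real.rpow_one (d:ℝ)]
        exact Real.rpow_le_rpow_of_exponent_le hd1 (by norm_num)
      have h4 : 0 < (d:ℝ)^(0.9:ℝ) := Real.rpow_pos_of_pos hd0 _
      have h5 : 2 * (N:ℝ) ≤ (2 * C + 2) * x := by nlinarith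
      have h6 : 0 ≤ (2 * C + 2) * x := by positivity
      exact div_le_div₀ h6 h5 h4 h3
    · obtain ⟨u, hu⟩ : ∃ u, u = Nat.log 2 d := ⟨_, rfl⟩
      obtain ⟨j, hj⟩ : ∃ j, j = Nat.log 2 u := ⟨_, rfl⟩
      have hu1 : 2^u ≤ d := hu ▸ Nat.pow_log_le_self 2 hd.ne'
      have hu2 : d < 2^(u+1) := hu ▸ Nat.lt_pow_succ_log_self (by norm_num) d
      have huge : 2^(I+5) ≤ u := hu ▸ Nat.le_log_of_pow_le (by norm_num) hlarge
      have hu0 : u ≠ 0 := by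
        have : 0 < 2^(I+5) := by positivity
        omega
      have hj1 : 2^j ≤ u := hj ▸ Nat.pow_log_le_self 2 hu0
      have hj2 : u < 2^(j+1) := hj ▸ Nat.lt_pow_succ_log_self (by norm_num) u
      have hjge : I + 5 ≤ j := hj ▸ Nat.le_log_of_pow_le (by norm_num) huge
      obtain ⟨i, hi⟩ : ∃ i, j = i + 5 := ⟨j - 5, by omega⟩
      subst hi
      have hd32 : (2^(2^i))^32 ≤ d := by
        rw [← pow_mul]
        have : 2^i * 32 = 2^(i+5) := by rw [pow_add]; norm_num
        rw [this]
        exact (Nat.pow_le_pow_right (by norm_num) hj1).trans hu1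
      have hdlt : d ≤ 2^(2^(i+6)) := by
        have : u + 1 ≤ 2^(i+6) := hj2
        exact hu2.le.trans (Nat.pow_le_pow_right (by norm_num) this)
      have hi6 : 6 ≤ i := by omega
      rcases le_or_gt (2^(2^(2^i))) N with hcase | hcase
      · have hp := pow_aux i hi6
        have hp32 : 2^5 ≤ 2^(i-1) := Nat.pow_le_pow_right (by norm_num) (by omega)
        have e : i + 6 + (2^i - i - 6) = 2^i := by omega
        have h1 := Bd_count (i+6) (2^i - i - 6) N d (by omega) (by omega) hd hdlt
        have h2 : (((Icc 1 N).filter (fun n => n ∉ E1 I N ∪ Bd a K N ∧ d ∣ s n)).card : ℝ) ≤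
            (((Icc 1 N).filter (fun n => n ∉ Bd (i+6) (2^i - i - 6) N ∧ d ∣ s n)).card : ℝ) := by
          refine Nat.cast_le.2 (Finset.card_le_card fun n hn => ?_)
          rw [Finset.mem_filter] at hn ⊢
          refine ⟨hn.1, fun hb => hn.2.1 ?_, hn.2.2⟩
          rw [Finset.mem_union]; left
          rw [E1, Finset.mem_filter]
          exact ⟨hn.1, i, by omega, hcase, hb⟩
        refine h2.trans (h1.trans ?_)
        refine final_arith C hC d hd (hτ d hd) (2^(2^i)) hd32 _ x N ?_ hNx
        rw [e]; push_cast; exact le_rfl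
      · have hda : d ≤ 2^(2^a) := by
          have hxt : x ≤ (2:ℝ)^((2:ℝ)^(t+1)) := by
            have h1 : N + 1 ≤ 2^(2^(t+1)) :=
              (Nat.succ_le_of_lt hl2).trans (Nat.pow_le_pow_right (by norm_num) ht2)
            have h2 : (N:ℝ) + 1 ≤ ((2^(2^(t+1)) : ℕ):ℝ) := by exact_mod_cast h1
            have h3 : ((2^(2^(t+1)) : ℕ):ℝ) = (2:ℝ)^((2:ℝ)^(t+1)) := by
              have h4 : ((2:ℝ)^(t+1)) = ((2^(t+1) : ℕ):ℝ) := by push_cast; rfl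
              rw [h4, Real.rpow_natCast]; push_cast; rfl
            linarith
          have hℓ0 : 0 < ℓ := lt_of_lt_of_le (by positivity) hℓ
          have h1 : (d:ℝ) ≤ ((2:ℝ)^((2:ℝ)^(t+1)))^(1 / (2 * ℓ)) :=
            hdx.trans (Real.rpow_le_rpow (by linarith) hxt (by positivity))
          rw [← Real.rpow_mul (by norm_num)] at h1
          have h2 : (2:ℝ)^(t+1) * (1 / (2 * ℓ)) ≤ 2^a := by
            rw [mul_one_div, div_le_iff₀ (by positivity), ha]
            have : (2:ℝ)^(a+K+1) = 2^a * (2 * 2^K) := by ring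
            rw [this]; gcongr
          have h3 : (d:ℝ) ≤ (2:ℝ)^((2:ℝ)^a) :=
            h1.trans (Real.rpow_le_rpow_of_exponent_le (by norm_num) h2)
          have h4 : ((2:ℝ)^a) = ((2^a : ℕ):ℝ) := by push_cast; rfl
          rw [h4, Real.rpow_natCast] at h3
          exact_mod_cast h3
        have h1 := Bd_count a K N d (by omega) (by omega) hd hda
        have h2 : (((Icc 1 N).filter (fun n => n ∉ E1 I N ∪ Bd a K N ∧ d ∣ s n)).card : ℝ) ≤
            (((Icc 1 N).filter (fun n => n ∉ Bd a K N ∧ d ∣ s n)).card : ℝ) := by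
          refine Nat.cast_le.2 (Finset.card_le_card fun n hn => ?_)
          rw [Finset.mem_filter] at hn ⊢
          refine ⟨hn.1, fun hb => hn.2.1 ?_, hn.2.2⟩
          rw [Finset.mem_union]; right; exact hb
        refine h2.trans (h1.trans ?_)
        refine final_arith C hC d hd (hτ d hd) (2^(2^i)) hd32 _ x N ?_ hNx
        have h3 : l < 2^(2^i) := hl ▸ Nat.log_lt_of_lt_pow hN0 hcase
        rw [← ha]
        have h4 : 2^t ≤ 2^(2^i) := ht1.trans h3.le
        exact_mod_cast h4

theorem div_s_count_bound_small_d :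
    ∃ C : ℝ, 0 < C ∧ ∃ x₀ : ℝ, ∃ E : ℝ → Finset ℕ,
      (∀ x : ℝ, x₀ ≤ x → ∀ n ∈ E x, 1 ≤ n ∧ (n : ℝ) ≤ x) ∧
      (fun x : ℝ => ((E x).card : ℝ)) =o[atTop] (fun x : ℝ => x) ∧
      ∀ x : ℝ, x₀ ≤ x → ∀ d : ℕ, 0 < d →
        (d : ℝ) ≤ x ^ (1 / (2 * Real.log (Real.log (Real.log x)))) →
        (((Finset.Icc 1 ⌊x⌋₊).filter (fun n => n ∉ E x ∧ d ∣ s n)).card : ℝ)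
          ≤ C * x / (d : ℝ) ^ (0.9 : ℝ) := by
  obtain ⟨C, hC, hmain⟩ := main_eps
  let good : ℝ → Finset ℕ → Prop := fun x E => ∀ d : ℕ, 0 < d →
        (d : ℝ) ≤ x ^ (1 / (2 * Real.log (Real.log (Real.log x)))) →
        (((Finset.Icc 1 ⌊x⌋₊).filter (fun n => n ∉ E ∧ d ∣ s n)).card : ℝ)
          ≤ C * x / (d : ℝ) ^ (0.9 : ℝ)
  have hex : ∀ x : ℝ, ∃ E : Finset ℕ, 1 ≤ x → (E ⊆ Icc 1 ⌊x⌋₊ ∧ good x E ∧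
      ∀ E' : Finset ℕ, E' ⊆ Icc 1 ⌊x⌋₊ → good x E' → E.card ≤ E'.card) := by
    intro x
    by_cases hx : 1 ≤ x
    · have hne : ((Icc 1 ⌊x⌋₊).powerset.filter (good x)).Nonempty := by
        refine ⟨Icc 1 ⌊x⌋₊, ?_⟩
        rw [Finset.mem_filter, Finset.mem_powerset]
        refine ⟨subset_rfl, fun d hd _ => ?_⟩
        have : (Finset.Icc 1 ⌊x⌋₊).filter (fun n => n ∉ Icc 1 ⌊x⌋₊ ∧ d ∣ s n) = ∅ := by
          rw [Finset.filter_eq_empty_iff]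
          intro n hn h
          exact h.1 hn
        rw [this, Finset.card_empty, Nat.cast_zero]
        positivity
      obtain ⟨E, hE, hmin⟩ := Finset.exists_min_image _ Finset.card hne
      rw [Finset.mem_filter, Finset.mem_powerset] at hE
      refine ⟨E, fun _ => ⟨hE.1, hE.2, fun E' h1 h2 => hmin E' ?_⟩⟩
      rw [Finset.mem_filter, Finset.mem_powerset]
      exact ⟨h1, h2⟩
    · exact ⟨∅, fun h => absurd h hx⟩
  choose E hE using hex
  refine ⟨C, hC, 1, E, ?_, ?_, ?_⟩
  · intro x hx n hn
    have := Finset.mem_Icc.1 ((hE x hx).1 hn)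
    exact ⟨this.1, (Nat.le_floor_iff (by linarith)).1 this.2⟩
  · rw [Asymptotics.isLittleO_iff]
    intro c hc
    filter_upwards [hmain c hc, eventually_ge_atTop (1:ℝ)] with x hx hx1
    obtain ⟨E', h1, h2, h3⟩ := hx
    have h4 : ((E x).card : ℝ) ≤ E'.card := by
      exact_mod_cast (hE x hx1).2.2 E' h1 h3
    rw [Real.norm_of_nonneg (Nat.cast_nonneg _), Real.norm_of_nonneg (by linarith)]
    linarith
  · intro x hx
    exact (hE x hx).2.1
end

section
/- Fix an integer k ≥ 2. Then as x → ∞, the number of integers n with 1 ≤ n ≤ x such that n is not k-free but s(n) is k-free is o(x). (That is, almost always, if n is not k-free then s(n) is not k-free.) -/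
open scoped Classical
open Filter Finset

/-- A positive integer `n` is `k`-free if no `k`-th power of a prime divides it. -/
def KFree (k n : ℕ) : Prop := ∀ p : ℕ, p.Prime → ¬ p ^ k ∣ n

/-- Reciprocals of primes in a residue class. -/
noncomputable def recipAP {q : ℕ} (a : ZMod q) (n : ℕ) : ℝ :=
  if n.Prime ∧ (n : ZMod q) = a then (n : ℝ)⁻¹ else 0

lemma recipAP_nonneg {q : ℕ} (a : ZMod q) (n : ℕ) : 0 ≤ recipAP a n := by
  unfold recipAP; split_ifs <;> positivity

open ArithmeticFunction ArithmeticFunction.vonMangoldt in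
lemma not_summable_recipAP {q : ℕ} [NeZero q] {a : ZMod q} (ha : IsUnit a) :
    ¬ Summable (recipAP a) := by
  intro H
  obtain ⟨C, hC⟩ := LSeries_residueClass_lower_bound ha
  have hc : 0 < (q.totient : ℝ)⁻¹ :=
    inv_pos.mpr (mod_cast Nat.totient_pos.mpr (Nat.pos_of_neZero q))
  set c := (q.totient : ℝ)⁻¹ with hcdef
  obtain ⟨N, hN⟩ : ∃ N : ℕ, ∑' n, recipAP a n - c / 2 < ∑ n ∈ range N, recipAP a n := by
    have := H.hasSum.tendsto_sum_nat
    exact (this.eventually (lt_mem_nhds (by linarith))).exists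
  let A : ℕ → ℝ := fun n ↦ (if n.Prime then 0 else residueClass a n) / n
  have hA : Summable A := summable_residueClass_non_primes_div a
  let B : ℕ → ℝ := fun n ↦ if n ∈ range N then Real.log n else 0
  have hB : Summable B := summable_of_ne_finset_zero (s := range N) (fun n hn ↦ if_neg hn)
  let D : ℕ → ℝ := fun n ↦ if n ∈ range N then recipAP a n else 0
  have hDs : HasSum D (∑ n ∈ range N, recipAP a n) := by
    have h : HasSum D (∑ n ∈ range N, D n) :=
      hasSum_sum_of_ne_finset_zero (fun n hn ↦ if_neg hn)
    have h2 : ∑ n ∈ range N, D n = ∑ n ∈ range N, recipAP a n :=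
      Finset.sum_congr rfl (fun n hn ↦ if_pos hn)
    rwa [h2] at h
  have hG := H.hasSum.sub hDs
  have hpt (x : ℝ) (hx : 1 < x) (n : ℕ) :
      residueClass a n / (n : ℝ) ^ x ≤ A n + B n + (recipAP a n - D n) / (x - 1) := by
    have hx1 : 0 < x - 1 := by linarith
    have hr := residueClass_nonneg a n
    have hrd : 0 ≤ recipAP a n - D n := by
      have := recipAP_nonneg a n
      simp only [D]; split_ifs <;> linarith
    have hB0 : 0 ≤ B n := by
      simp only [B]; split_ifs
      · exact Real.log_natCast_nonneg n
      · exact le_rfl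
    rcases n.eq_zero_or_pos with rfl | hn
    · have hA0 : 0 ≤ A 0 := by simp [A]
      have : residueClass a 0 / ((0 : ℕ) : ℝ) ^ x = 0 := by simp
      rw [this]
      have := div_nonneg hrd hx1.le
      linarith
    have hn1 : (1 : ℝ) ≤ n := by exact_mod_cast hn
    have hn0 : (0 : ℝ) < n := by linarith
    have hpow : (n : ℝ) ≤ (n : ℝ) ^ x := by
      conv_lhs => rw [← Real.rpow_one n]
      exact Real.rpow_le_rpow_of_exponent_le hn1 hx.le
    by_cases hp : n.Prime
    · have hA0 : A n = 0 := by simp [A, hp]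
      by_cases hna : (n : ZMod q) = a
      · have hres : residueClass a n = Real.log n := by
          simp [residueClass, Set.indicator, hna, vonMangoldt_apply_prime hp]
        rw [hres, hA0]
        by_cases hnN : n ∈ range N
        · have hBn : B n = Real.log n := if_pos hnN
          have h3 := div_nonneg hrd hx1.le
          have h4 : Real.log n / (n : ℝ) ^ x ≤ Real.log n :=
            div_le_self (Real.log_natCast_nonneg n) (hn1.trans hpow)
          linarith
        · have hDn : D n = 0 := if_neg hnN
          have hrn : recipAP a n = (n : ℝ)⁻¹ := if_pos ⟨hp, hna⟩
          have h4 : Real.log n / (n : ℝ) ^ x ≤ (n : ℝ)⁻¹ / (x - 1) := by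
            have h5 := Real.log_le_rpow_div hn0.le hx1
            have h6 : (n : ℝ) ^ x = (n : ℝ) ^ (x - 1) * n := by
              rw [← Real.rpow_add_one hn0.ne']; congr 1; ring
            have h7 : 0 < (n : ℝ) ^ (x - 1) := Real.rpow_pos_of_pos hn0 _
            rw [h6, div_le_iff₀ (by positivity)]
            refine h5.trans (le_of_eq ?_)
            field_simp
          rw [hDn, hrn, sub_zero]
          linarith
      · have hres : residueClass a n = 0 := by
          simp [residueClass, Set.indicator, hna]
        rw [hres, zero_div, hA0]
        have h3 := div_nonneg hrd hx1.le
        linarith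
    · have hA0 : A n = residueClass a n / n := by simp [A, hp]
      have h4 : residueClass a n / (n : ℝ) ^ x ≤ residueClass a n / n :=
        div_le_div_of_nonneg_left hr hn0 hpow
      have h3 := div_nonneg hrd hx1.le
      linarith
  set K := ∑' n, A n + ∑' n, B n + C with hK
  have key (x : ℝ) (hx : x ∈ Set.Ioc (1 : ℝ) 2) : c / 2 ≤ K * (x - 1) := by
    have hx1 : 0 < x - 1 := by linarith [hx.1]
    have hs := (hA.hasSum.add hB.hasSum).add (hG.div_const (x - 1))
    have h1 : ∑' n, residueClass a n / (n : ℝ) ^ x ≤ _ :=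
      Summable.tsum_le_tsum (hpt x hx.1) (LSeries.summable_real_of_abscissaOfAbsConv_lt <|
        (abscissaOfAbsConv_residueClass_le_one a).trans_lt <| mod_cast hx.1) hs.summable
    rw [hs.tsum_eq] at h1
    have h2 := (hC hx).trans h1
    have h3 : (∑' n, recipAP a n - ∑ n ∈ range N, recipAP a n) / (x - 1) ≤ (c / 2) / (x - 1) := by
      apply div_le_div_of_nonneg_right _ hx1.le
      linarith
    have h4 : c / (x - 1) = (c / 2) / (x - 1) + (c / 2) / (x - 1) := by ring
    have h5 : (c / 2) / (x - 1) ≤ K := by linarith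
    exact (div_le_iff₀ hx1).mp h5
  set δ := min 1 (c / (4 * (|K| + 1))) with hδ
  have hKp : 0 < |K| + 1 := by positivity
  have hδ0 : 0 < δ := lt_min one_pos (by positivity)
  have h1 := key (1 + δ) ⟨by linarith, by linarith [min_le_left 1 (c / (4 * (|K| + 1)))]⟩
  have h2 : K * (1 + δ - 1) ≤ (|K| + 1) * (c / (4 * (|K| + 1))) := by
    have : 1 + δ - 1 = δ := by ring
    rw [this]
    exact mul_le_mul (by linarith [le_abs_self K]) (min_le_right _ _) hδ0.le hKp.le
  have h3 : (|K| + 1) * (c / (4 * (|K| + 1))) = c / 4 := by field_simp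
  linarith

lemma card_sq_dvd_le (N z : ℕ) (hz : z ≠ 0) :
    (((Icc 1 N).filter (fun n ↦ ∃ d, z < d ∧ d ^ 2 ∣ n)).card : ℝ) ≤ N * (z : ℝ)⁻¹ := by
  have hsub : (Icc 1 N).filter (fun n ↦ ∃ d, z < d ∧ d ^ 2 ∣ n) ⊆
      (Ioc z N).biUnion (fun d ↦ (Ioc 0 N).filter (fun n ↦ d ^ 2 ∣ n)) := by
    intro n hn
    simp only [mem_filter, mem_Icc] at hn
    obtain ⟨⟨h1, h2⟩, d, hd, hdn⟩ := hn
    have h3 := Nat.le_of_dvd h1 hdn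
    have h4 : d ≤ d ^ 2 := Nat.le_self_pow two_ne_zero d
    simp only [mem_biUnion, mem_filter, mem_Ioc]
    exact ⟨d, ⟨hd, by omega⟩, ⟨by omega, h2⟩, hdn⟩
  have h1 := (card_le_card hsub).trans card_biUnion_le
  simp only [Nat.Ioc_filter_dvd_card_eq_div] at h1
  have h2 : (∑ d ∈ Ioc z N, ((N / d ^ 2 : ℕ) : ℝ)) ≤ ∑ d ∈ Ioc z N, (N : ℝ) * ((d : ℝ) ^ 2)⁻¹ := by
    refine sum_le_sum fun d _ ↦ ?_
    refine Nat.cast_div_le.trans (le_of_eq ?_)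
    push_cast; rw [div_eq_mul_inv]
  have h3 : (∑ d ∈ Ioc z N, ((d : ℝ) ^ 2)⁻¹) ≤ (z : ℝ)⁻¹ := by
    rcases le_total z N with h | h
    · have := sum_Ioc_inv_sq_le_sub (α := ℝ) hz h
      have : (0 : ℝ) ≤ (N : ℝ)⁻¹ := by positivity
      linarith
    · rw [Ioc_eq_empty_of_le h]; simp
  calc _ ≤ ((∑ d ∈ Ioc z N, N / d ^ 2 : ℕ) : ℝ) := by exact_mod_cast h1
    _ = ∑ d ∈ Ioc z N, ((N / d ^ 2 : ℕ) : ℝ) := by push_cast; rfl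
    _ ≤ _ := h2
    _ = N * ∑ d ∈ Ioc z N, ((d : ℝ) ^ 2)⁻¹ := by rw [mul_sum]
    _ ≤ _ := by gcongr

lemma dvd_sigma1 {m p n : ℕ} (hp : p.Prime) (hpm : m ∣ p + 1) (h1 : p ∣ n) (h2 : ¬ p ^ 2 ∣ n) :
    m ∣ sigma1 n := by
  obtain ⟨t, rfl⟩ := h1
  have hc : p.Coprime t := by
    rw [hp.coprime_iff_not_dvd]
    intro h
    exact h2 (by rw [pow_two]; exact Nat.mul_dvd_mul_left p h)
  unfold sigma1
  rw [ArithmeticFunction.isMultiplicative_sigma.map_mul_of_coprime hc]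
  have : ArithmeticFunction.sigma 1 p = p + 1 := by
    rw [ArithmeticFunction.sigma_one_apply, hp.sum_divisors]
    try ring
  rw [this]
  exact Dvd.dvd.mul_right hpm _

lemma sigma1_almost_all (m : ℕ) (hm : m ≠ 0) (ε : ℝ) (hε : 0 < ε) :
    ∀ᶠ N : ℕ in atTop, (((Icc 1 N).filter (fun n ↦ ¬ m ∣ sigma1 n)).card : ℝ) ≤ ε * N := by
  have : NeZero m := ⟨hm⟩
  have hns := not_summable_recipAP (q := m) (a := -1) isUnit_one.neg
  rw [not_summable_iff_tendsto_nat_atTop_of_nonneg (recipAP_nonneg _)] at hns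
  obtain ⟨z, hz⟩ := exists_nat_gt (4 / ε)
  have hz0 : (0 : ℝ) < z := lt_trans (by positivity) hz
  have hzne : z ≠ 0 := by rintro rfl; simp at hz0
  have hzi : (z : ℝ)⁻¹ ≤ ε / 4 := by
    rw [inv_le_comm₀ hz0 (by positivity), inv_div]; exact hz.le
  obtain ⟨M, hM⟩ := (hns.eventually_ge_atTop
    (∑ i ∈ range (z + 1), recipAP (-1 : ZMod m) i + (-Real.log (ε / 4)))).exists
  set P := (range M).filter (fun n ↦ z < n ∧ n.Prime ∧ (n : ZMod m) = -1) with hP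
  have hPp : ∀ p ∈ P, p.Prime := fun p hp ↦ (mem_filter.mp hp).2.2.1
  have hPsum : -Real.log (ε / 4) ≤ ∑ p ∈ P, (p : ℝ)⁻¹ := by
    have h1 : ∑ i ∈ range M, recipAP (-1 : ZMod m) i ≤
        ∑ i ∈ range (z + 1), recipAP (-1 : ZMod m) i + ∑ p ∈ P, recipAP (-1 : ZMod m) p := by
      have hsub : (range M).filter (fun n ↦ recipAP (-1 : ZMod m) n ≠ 0) ⊆ range (z + 1) ∪ P := by
        intro n hn
        simp only [mem_filter, mem_range, mem_union, hP] at hn ⊢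
        obtain ⟨h1, h2⟩ := hn
        have h3 : n.Prime ∧ (n : ZMod m) = -1 := by
          by_contra h
          exact h2 (if_neg h)
        by_cases hzn : z < n
        · exact Or.inr ⟨h1, hzn, h3⟩
        · exact Or.inl (by omega)
      rw [← sum_filter_ne_zero]
      refine (sum_le_sum_of_subset_of_nonneg hsub fun i _ _ ↦ recipAP_nonneg _ i).trans ?_
      rw [← sum_union_inter]
      have := sum_nonneg (s := range (z + 1) ∩ P) (fun i _ ↦ recipAP_nonneg (-1 : ZMod m) i)
      linarith
    have h2 : ∑ p ∈ P, recipAP (-1 : ZMod m) p = ∑ p ∈ P, (p : ℝ)⁻¹ :=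
      sum_congr rfl fun p hp ↦ if_pos (mem_filter.mp hp).2.2
    linarith
  set Q := ∏ p ∈ P, p with hQ
  have hQ0 : Q ≠ 0 := prod_ne_zero_iff.mpr fun p hp ↦ (hPp p hp).ne_zero
  have hQpf : Q.primeFactors = P := Nat.primeFactors_prod hPp
  have htot : (Q.totient : ℝ) ≤ Q * (ε / 4) := by
    have h1 := Nat.totient_eq_mul_prod_factors Q
    rw [hQpf] at h1
    have h2 : (Q.totient : ℝ) = Q * ∏ p ∈ P, (1 - (p : ℝ)⁻¹) := by
      have h3 := congrArg (fun t : ℚ ↦ (t : ℝ)) h1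
      push_cast at h3
      exact h3
    rw [h2]
    refine mul_le_mul_of_nonneg_left ?_ (Nat.cast_nonneg _)
    calc ∏ p ∈ P, (1 - (p : ℝ)⁻¹) ≤ ∏ p ∈ P, Real.exp (-(p : ℝ)⁻¹) := by
          refine prod_le_prod (fun p hp ↦ ?_) (fun p hp ↦ ?_)
          · have : (1 : ℝ) ≤ p := by exact_mod_cast (hPp p hp).one_le
            linarith [inv_le_one_of_one_le₀ this]
          · exact Real.one_sub_le_exp_neg _
      _ = Real.exp (-∑ p ∈ P, (p : ℝ)⁻¹) := by rw [← Real.exp_sum, sum_neg_distrib]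
      _ ≤ Real.exp (Real.log (ε / 4)) := Real.exp_le_exp.mpr (by linarith)
      _ = ε / 4 := Real.exp_log (by positivity)
  obtain ⟨N₀, hN₀⟩ := exists_nat_gt ((Q.totient : ℝ) / (ε / 4))
  filter_upwards [eventually_ge_atTop N₀] with N hN
  have hsub : (Icc 1 N).filter (fun n ↦ ¬ m ∣ sigma1 n) ⊆
      (Icc 1 N).filter (fun n ↦ ∃ d, z < d ∧ d ^ 2 ∣ n) ∪
        (Ico 1 (1 + N)).filter (fun n ↦ Q.Coprime n) := by
    intro n hn
    simp only [mem_filter, mem_Icc, mem_union, mem_Ico] at hn ⊢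
    obtain ⟨⟨h1, h2⟩, h3⟩ := hn
    by_cases hc : Q.Coprime n
    · exact Or.inr ⟨⟨h1, by omega⟩, hc⟩
    · left
      refine ⟨⟨h1, h2⟩, ?_⟩
      rw [hQ, Nat.coprime_prod_left_iff] at hc
      push Not at hc
      obtain ⟨p, hp, hpn⟩ := hc
      have hpp := hPp p hp
      have hdvd : p ∣ n := by
        by_contra h
        exact hpn ((hpp.coprime_iff_not_dvd).mpr h)
      have hp2 := (mem_filter.mp hp).2
      refine ⟨p, hp2.1, ?_⟩
      by_contra hsq
      refine h3 (dvd_sigma1 hpp ?_ hdvd hsq)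
      rw [← ZMod.natCast_eq_zero_iff]
      push_cast
      rw [hp2.2.2]; ring
  have h1 := (card_le_card hsub).trans (card_union_le _ _)
  have h2 := Nat.Ico_filter_coprime_le 1 N hQ0
  have h3 := card_sq_dvd_le N z hzne
  have hQr : (0 : ℝ) < Q := by exact_mod_cast Nat.pos_of_ne_zero hQ0
  have h4 : ((Q.totient * (N / Q + 1) : ℕ) : ℝ) ≤ (ε / 4) * N + Q.totient := by
    push_cast
    have h5 : ((N / Q : ℕ) : ℝ) ≤ (N : ℝ) / Q := Nat.cast_div_le
    calc (Q.totient : ℝ) * (((N / Q : ℕ) : ℝ) + 1)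
        = Q.totient * ((N / Q : ℕ) : ℝ) + Q.totient := by ring
      _ ≤ (Q * (ε / 4)) * ((N : ℝ) / Q) + Q.totient := by gcongr
      _ = _ := by field_simp
  have h6 : (Q.totient : ℝ) ≤ (ε / 4) * N := by
    have : (Q.totient : ℝ) / (ε / 4) ≤ N := hN₀.le.trans (by exact_mod_cast hN)
    rw [div_le_iff₀ (by positivity)] at this
    linarith
  have h7 : (N : ℝ) * (z : ℝ)⁻¹ ≤ N * (ε / 4) := by gcongr
  have h8 : (((Ico 1 (1 + N)).filter (fun n ↦ Q.Coprime n)).card : ℝ) ≤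
      ((Q.totient * (N / Q + 1) : ℕ) : ℝ) := by
    refine Nat.cast_le.mpr (le_trans (le_of_eq ?_) h2)
    congr!
  have h9 : (((Icc 1 N).filter (fun n ↦ ¬ m ∣ sigma1 n)).card : ℝ) ≤
      ((Icc 1 N).filter (fun n ↦ ∃ d, z < d ∧ d ^ 2 ∣ n)).card +
        ((Ico 1 (1 + N)).filter (fun n ↦ Q.Coprime n)).card := by exact_mod_cast h1
  have h10 : 0 ≤ ε * N := by positivity
  linarith

lemma main_nat (k : ℕ) (hk : 2 ≤ k) (ε : ℝ) (hε : 0 < ε) :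
    ∀ᶠ N : ℕ in atTop, (((Icc 1 N).filter
      (fun n ↦ ¬ KFree k n ∧ KFree k (s n))).card : ℝ) ≤ ε * N := by
  obtain ⟨z, hz⟩ := exists_nat_gt (2 / ε)
  have hz0 : (0 : ℝ) < z := lt_trans (by positivity) hz
  have hzne : z ≠ 0 := by rintro rfl; simp at hz0
  have hzi : (z : ℝ)⁻¹ ≤ ε / 2 := by
    rw [inv_le_comm₀ hz0 (by positivity), inv_div]; exact hz.le
  have hall : ∀ᶠ N : ℕ in atTop, ∀ p ∈ Icc 1 z,
      (((Icc 1 N).filter (fun n ↦ ¬ p ^ k ∣ sigma1 n)).card : ℝ) ≤ (ε / (2 * z)) * N := by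
    rw [eventually_all_finset]
    intro p hp
    have : p ≠ 0 := by have := (mem_Icc.mp hp).1; omega
    exact sigma1_almost_all (p ^ k) (pow_ne_zero k this) _ (by positivity)
  filter_upwards [hall] with N hN
  have hsub : (Icc 1 N).filter (fun n ↦ ¬ KFree k n ∧ KFree k (s n)) ⊆
      (Icc 1 N).filter (fun n ↦ ∃ d, z < d ∧ d ^ 2 ∣ n) ∪
        (Icc 1 z).biUnion (fun p ↦ (Icc 1 N).filter (fun n ↦ ¬ p ^ k ∣ sigma1 n)) := by
    intro n hn
    rw [mem_filter] at hn
    obtain ⟨h1, h2, h3⟩ := hn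
    unfold KFree at h2
    push Not at h2
    obtain ⟨p, hp, hpn⟩ := h2
    rw [mem_union]
    by_cases hpz : z < p
    · left
      exact mem_filter.mpr ⟨h1, p, hpz, (pow_dvd_pow p hk).trans hpn⟩
    · right
      refine mem_biUnion.mpr ⟨p, mem_Icc.mpr ⟨hp.one_le, by omega⟩, mem_filter.mpr ⟨h1, ?_⟩⟩
      intro hd
      exact h3 p hp (Nat.dvd_sub hd hpn)
  have h1 := (card_le_card hsub).trans
    ((card_union_le _ _).trans (Nat.add_le_add_left card_biUnion_le _))
  have h2 : (((Icc 1 N).filter (fun n ↦ ¬ KFree k n ∧ KFree k (s n))).card : ℝ) ≤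
      ((Icc 1 N).filter (fun n ↦ ∃ d, z < d ∧ d ^ 2 ∣ n)).card +
      ∑ p ∈ Icc 1 z, (((Icc 1 N).filter (fun n ↦ ¬ p ^ k ∣ sigma1 n)).card : ℝ) := by
    exact_mod_cast h1
  have h3 := card_sq_dvd_le N z hzne
  have h4 := sum_le_sum hN
  rw [sum_const, Nat.card_Icc, nsmul_eq_mul] at h4
  have h5 : ((z + 1 - 1 : ℕ) : ℝ) * (ε / (2 * z) * N) = ε / 2 * N := by
    rw [Nat.add_sub_cancel]; field_simp
  have h7 : (N : ℝ) * (z : ℝ)⁻¹ ≤ N * (ε / 2) := by gcongr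
  linarith

theorem not_kfree_to_not_kfree_s (k : ℕ) (hk : 2 ≤ k) :
    (fun x : ℝ => (((Finset.Icc 1 ⌊x⌋₊).filter
        (fun n => ¬ KFree k n ∧ KFree k (s n))).card : ℝ))
      =o[atTop] (fun x : ℝ => x) := by
  rw [Asymptotics.isLittleO_iff]
  intro ε hε
  filter_upwards [tendsto_nat_floor_atTop.eventually (main_nat k hk ε hε),
    eventually_ge_atTop (0 : ℝ)] with x hx hx0
  rw [Real.norm_of_nonneg (Nat.cast_nonneg _), Real.norm_of_nonneg hx0]
  exact hx.trans (mul_le_mul_of_nonneg_left (Nat.floor_le hx0) hε.le)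
end
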